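/- arXiv:math-ph/0412080 — 3 statements merged into one kernel-verified Lean document; each statement's English description precedes it below -/
import Mathlib

section
/- There exists a universal constant C with the following property. Let s > 0, κ ≥ 0, let z₁,…,z_k ∈ ℝ³ have pairwise distances ≥ s, and let B_j denote the open ball of radius s/2 centered at z_j (so the B_j are disjoint). Let q : ℝ³ → [0,1] be measurable, vanishing outside ∪_j B_j, with ∫_{B_j} q(x) dx ≤ κ for each j. Then for every smooth compactly supported φ : ℝ³ → ℂ, ∫_{ℝ³} q(x) |φ(x)|² dx ≤ C ( (κ/s³) ∫_{ℝ³} |φ(x)|² dx + s² ∫_{ℝ³} |∇φ(x)|² dx ). -/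
noncomputable section

open MeasureTheory Real
open scoped BigOperators

abbrev E3 := EuclideanSpace ℝ (Fin 3)

/-- `|∇φ(x)|² = Σ_a |∂_a φ(x)|²`. -/
def gradNormSq3 (f : E3 → ℂ) (x : E3) : ℝ :=
  ∑ a : Fin 3, ‖fderiv ℝ f x (EuclideanSpace.single a 1)‖ ^ 2

/-!
Averaging `‖φ x‖ᵖ ≤ 2ᵖ⁻¹ (‖φ y‖ᵖ + ‖φ x - φ y‖ᵖ)` over `y` in a ball `B` and integrating against a
weight `0 ≤ q ≤ 1` bounds `∫_B q ‖φ‖ᵖ` by the mean of `q` over `B` times `∫_B ‖φ‖ᵖ`, plus the mean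
oscillation `μ(B)⁻¹ ∬_{B×B} ‖φ x - φ y‖ᵖ`. The oscillation is controlled by a Poincaré inequality
valid on every convex set: `‖φ x - φ y‖ᵖ` is at most `(diam B)ᵖ` times the integral of `‖Dφ‖ᵖ` along
the segment from `x` to `y`, and for each fixed `t` one of the two homotheties `y ↦ (1 - t) x + t y`
and `x ↦ (1 - t) x + t y` has ratio at least `1/2`, so the change of variables costs at most `2ⁿ`.
Summing over disjoint balls gives the claim.
-/

open AffineMap Metric Module Set
open scoped ENNReal

lemma rpow_lintegral_le_lintegral_rpow {α : Type*} [MeasurableSpace α] {μ : Measure α}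
    [IsProbabilityMeasure μ] {f : α → ℝ≥0∞} (hf : AEMeasurable f μ) {p : ℝ} (hp : 1 ≤ p) :
    (∫⁻ x, f x ∂μ) ^ p ≤ ∫⁻ x, f x ^ p ∂μ := by
  have hp0 : 0 < p := one_pos.trans_le hp
  have h := eLpNorm'_le_eLpNorm'_of_exponent_le one_pos hp μ hf.aestronglyMeasurable
  simp only [eLpNorm', enorm_eq_self, ENNReal.rpow_one, div_one] at h
  rwa [one_div, ENNReal.le_rpow_inv_iff hp0] at h

lemma enorm_rpow_le_mul_laverage_add_laverage {α F : Type*} [MeasurableSpace α] {μ : Measure α}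
    [IsFiniteMeasure μ] [NeZero μ] [NormedAddCommGroup F] {f : α → F} {p : ℝ} (hp : 1 ≤ p)
    (hf : AEMeasurable (fun x => ‖f x‖ₑ ^ p) μ) (c : F) :
    ‖c‖ₑ ^ p ≤ 2 ^ (p - 1) * (⨍⁻ x, ‖f x‖ₑ ^ p ∂μ + ⨍⁻ x, ‖c - f x‖ₑ ^ p ∂μ) := by
  have triangle (x : α) : ‖c‖ₑ ^ p ≤ 2 ^ (p - 1) * (‖f x‖ₑ ^ p + ‖c - f x‖ₑ ^ p) := by
    refine le_trans ?_ (ENNReal.rpow_add_le_mul_rpow_add_rpow _ _ hp)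
    gcongr
    simpa using enorm_add_le (f x) (c - f x)
  calc ‖c‖ₑ ^ p = ⨍⁻ _, ‖c‖ₑ ^ p ∂μ := (laverage_const μ _).symm
    _ ≤ ⨍⁻ x, 2 ^ (p - 1) * (‖f x‖ₑ ^ p + ‖c - f x‖ₑ ^ p) ∂μ := lintegral_mono triangle
    _ = 2 ^ (p - 1) * (⨍⁻ x, ‖f x‖ₑ ^ p ∂μ + ⨍⁻ x, ‖c - f x‖ₑ ^ p ∂μ) := by
      simp_rw [laverage]
      rw [lintegral_const_mul' _ _ (by simp), lintegral_add_left' (hf.smul_measure _)]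

lemma ofReal_integral_norm_rpow {α F : Type*} [MeasurableSpace α] {μ : Measure α}
    [SeminormedAddCommGroup F] {f : α → F} {p : ℝ} (hp : 0 ≤ p)
    (hf : Integrable (fun x => ‖f x‖ ^ p) μ) :
    ENNReal.ofReal (∫ x, ‖f x‖ ^ p ∂μ) = ∫⁻ x, ‖f x‖ₑ ^ p ∂μ := by
  rw [ofReal_integral_eq_lintegral_ofReal hf (.of_forall fun x => by positivity)]
  simp_rw [← ENNReal.ofReal_rpow_of_nonneg (norm_nonneg _) hp, ofReal_norm]

section HaarMeasure

variable {E : Type*} [NormedAddCommGroup E] [NormedSpace ℝ E] [FiniteDimensional ℝ E]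
  [MeasurableSpace E] [BorelSpace E] (μ : Measure E) [μ.IsAddHaarMeasure]

lemma lintegral_lineMap_right (h : E → ℝ≥0∞) (x : E) {t : ℝ} (ht : t ≠ 0) :
    ∫⁻ y, h (lineMap x y t) ∂μ = ENNReal.ofReal |(t ^ finrank ℝ E)⁻¹| * ∫⁻ y, h y ∂μ := by
  calc ∫⁻ y, h (lineMap x y t) ∂μ
      = ∫⁻ y, h (t • y + x) ∂μ := by
        simp_rw [lineMap_apply_module']
        exact lintegral_sub_right_eq_self (fun y => h (t • y + x)) x
    _ = ∫⁻ y, h (y + x) ∂μ.map (t • ·) :=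
        ((Homeomorph.smulOfNeZero t ht).measurableEmbedding.lintegral_map fun y => h (y + x)).symm
    _ = ENNReal.ofReal |(t ^ finrank ℝ E)⁻¹| * ∫⁻ y, h y ∂μ := by
        rw [Measure.map_addHaar_smul μ ht, lintegral_smul_measure, lintegral_add_right_eq_self,
          smul_eq_mul]

variable {S : Set E}

lemma setLIntegral_lineMap_right_le (hS : Convex ℝ S) (hSm : MeasurableSet S) (h : E → ℝ≥0∞)
    {x : E} (hx : x ∈ S) {t : ℝ} (ht : t ∈ Ioc 0 1) :
    ∫⁻ y in S, h (lineMap x y t) ∂μ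
      ≤ ENNReal.ofReal |(t ^ finrank ℝ E)⁻¹| * ∫⁻ y in S, h y ∂μ := by
  have indicator_le (y : E) :
      S.indicator (fun y => h (lineMap x y t)) y ≤ S.indicator h (lineMap x y t) :=
    indicator_apply_le'
      (fun hy => (indicator_of_mem (hS.lineMap_mem hx hy ⟨ht.1.le, ht.2⟩) h).ge)
      (fun _ => zero_le)
  calc ∫⁻ y in S, h (lineMap x y t) ∂μ
      ≤ ∫⁻ y, S.indicator h (lineMap x y t) ∂μ := by
        rw [← lintegral_indicator hSm]
        exact lintegral_mono indicator_le
    _ = ENNReal.ofReal |(t ^ finrank ℝ E)⁻¹| * ∫⁻ y in S, h y ∂μ := by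
        rw [lintegral_lineMap_right μ _ x ht.1.ne', lintegral_indicator hSm]

lemma lintegral_lintegral_lineMap_le (hS : Convex ℝ S) (hSm : MeasurableSet S) {h : E → ℝ≥0∞}
    (hh : Measurable h) {t : ℝ} (ht : t ∈ Icc 0 1) :
    ∫⁻ x in S, ∫⁻ y in S, h (lineMap x y t) ∂μ ∂μ
      ≤ 2 ^ finrank ℝ E * μ S * ∫⁻ u in S, h u ∂μ := by
  -- Exchanging `x` and `y` turns `t` into `1 - t`; on `t ≥ 1/2` the Jacobian `t⁻ⁿ` is at most `2ⁿ`.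
  wlog half_le : 1 / 2 ≤ t generalizing t
  · rw [lintegral_lintegral_swap (by simp_rw [lineMap_apply_module]; fun_prop)]
    simpa only [lineMap_apply_one_sub] using
      this (t := 1 - t) ⟨by linarith [ht.2], by linarith [ht.1]⟩ (by linarith)
  have jacobian_le : ENNReal.ofReal |(t ^ finrank ℝ E)⁻¹| ≤ 2 ^ finrank ℝ E := by
    rw [abs_of_nonneg (by positivity [ht.1]), ← inv_pow, ENNReal.ofReal_pow (by positivity [ht.1])]
    gcongr
    rw [ENNReal.ofReal_le_ofNat]
    exact (inv_anti₀ (by norm_num) half_le).trans_eq (by norm_num)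
  calc ∫⁻ x in S, ∫⁻ y in S, h (lineMap x y t) ∂μ ∂μ
      ≤ ∫⁻ _ in S, 2 ^ finrank ℝ E * ∫⁻ u in S, h u ∂μ ∂μ :=
        setLIntegral_mono' hSm fun x hx =>
          (setLIntegral_lineMap_right_le μ hS hSm h hx ⟨by linarith, ht.2⟩).trans (by gcongr)
    _ = 2 ^ finrank ℝ E * μ S * ∫⁻ u in S, h u ∂μ := by
        rw [setLIntegral_const, mul_right_comm]

lemma measureReal_ball_of_pos (x : E) {r : ℝ} (hr : 0 < r) :
    μ.real (ball x r) = r ^ finrank ℝ E * μ.real (ball 0 1) := by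
  rw [measureReal_def, μ.addHaar_ball_of_pos x hr, ENNReal.toReal_mul,
    ENNReal.toReal_ofReal (by positivity), measureReal_def]

end HaarMeasure

section Differentiable

variable {F : Type*} [NormedAddCommGroup F] [NormedSpace ℝ F] [CompleteSpace F]

lemma enorm_sub_le_lintegral_enorm_deriv {f : ℝ → F} {a b : ℝ} (hab : a ≤ b)
    (hf : ∀ t ∈ Icc a b, DifferentiableAt ℝ f t) :
    ‖f b - f a‖ₑ ≤ ∫⁻ t in Ioc a b, ‖deriv f t‖ₑ := by
  rcases eq_or_ne (∫⁻ t in Ioc a b, ‖deriv f t‖ₑ) ∞ with h_top | h_top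
  · exact h_top ▸ le_top
  have deriv_int : IntegrableOn (deriv f) (Ioc a b) :=
    ⟨aestronglyMeasurable_deriv f _, h_top.lt_top⟩
  rw [← intervalIntegral.integral_deriv_eq_sub (by rwa [uIcc_of_le hab])
    ((intervalIntegrable_iff_integrableOn_Ioc_of_le hab).2 deriv_int),
    intervalIntegral.integral_of_le hab]
  exact enorm_integral_le_lintegral_enorm _

variable {E : Type*} [NormedAddCommGroup E] [NormedSpace ℝ E] {φ : E → F}

lemma enorm_sub_le_mul_lintegral_enorm_fderiv {x y : E}
    (hφ : ∀ z ∈ segment ℝ x y, DifferentiableAt ℝ φ z) :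
    ‖φ x - φ y‖ₑ
      ≤ edist x y * ∫⁻ t in Ioc (0 : ℝ) 1, ‖fderiv ℝ φ (lineMap x y t)‖ₑ := by
  have hasDerivAt_line (t : ℝ) (ht : t ∈ Icc 0 1) :
      HasDerivAt (fun t => φ (lineMap x y t)) (fderiv ℝ φ (lineMap x y t) (y - x)) t :=
    (hφ _ (lineMap_mem_segment ℝ x y ht)).hasFDerivAt.comp_hasDerivAt t hasDerivAt_lineMap
  have ftc := enorm_sub_le_lintegral_enorm_deriv zero_le_one
    fun t ht => (hasDerivAt_line t ht).differentiableAt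
  simp only [lineMap_apply_one, lineMap_apply_zero] at ftc
  rw [← enorm_neg, neg_sub]
  refine ftc.trans ?_
  rw [edist_comm, edist_eq_enorm_sub, ← lintegral_const_mul' _ _ enorm_ne_top]
  refine setLIntegral_mono' measurableSet_Ioc fun t ht => ?_
  rw [(hasDerivAt_line t (Ioc_subset_Icc_self ht)).deriv, mul_comm]
  exact (fderiv ℝ φ (lineMap x y t)).le_opENorm _

variable [MeasurableSpace E] [BorelSpace E] {p : ℝ}

lemma enorm_sub_rpow_le_mul_lintegral_enorm_fderiv_rpow (hp : 1 ≤ p) {x y : E}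
    (hφ : ∀ z ∈ segment ℝ x y, DifferentiableAt ℝ φ z) :
    ‖φ x - φ y‖ₑ ^ p
      ≤ edist x y ^ p * ∫⁻ t in Ioc (0 : ℝ) 1, ‖fderiv ℝ φ (lineMap x y t)‖ₑ ^ p := by
  have hp0 : 0 ≤ p := zero_le_one.trans hp
  have : IsProbabilityMeasure (volume.restrict (Ioc (0 : ℝ) 1)) := ⟨by simp⟩
  calc ‖φ x - φ y‖ₑ ^ p
      ≤ (edist x y * ∫⁻ t in Ioc (0 : ℝ) 1, ‖fderiv ℝ φ (lineMap x y t)‖ₑ) ^ p := by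
        gcongr
        exact enorm_sub_le_mul_lintegral_enorm_fderiv hφ
    _ = edist x y ^ p * (∫⁻ t in Ioc (0 : ℝ) 1, ‖fderiv ℝ φ (lineMap x y t)‖ₑ) ^ p :=
        ENNReal.mul_rpow_of_nonneg _ _ hp0
    _ ≤ edist x y ^ p * ∫⁻ t in Ioc (0 : ℝ) 1, ‖fderiv ℝ φ (lineMap x y t)‖ₑ ^ p := by
        gcongr
        refine rpow_lintegral_le_lintegral_rpow (Measurable.aemeasurable ?_) hp
        exact ((measurable_fderiv ℝ φ).comp lineMap_continuous.measurable).enorm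

variable [FiniteDimensional ℝ E] (μ : Measure E) [μ.IsAddHaarMeasure] {S : Set E}

theorem lintegral_lintegral_enorm_sub_rpow_le (hp : 1 ≤ p) (hS : Convex ℝ S)
    (hSm : MeasurableSet S) (hφ : ∀ x ∈ S, DifferentiableAt ℝ φ x) :
    ∫⁻ x in S, ∫⁻ y in S, ‖φ x - φ y‖ₑ ^ p ∂μ ∂μ
      ≤ 2 ^ finrank ℝ E * μ S * (ediam S ^ p * ∫⁻ x in S, ‖fderiv ℝ φ x‖ₑ ^ p ∂μ) := by
  set h : E → ℝ≥0∞ := fun u => ediam S ^ p * ‖fderiv ℝ φ u‖ₑ ^ p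
  have hD : Measurable fun u => ‖fderiv ℝ φ u‖ₑ ^ p := (measurable_fderiv ℝ φ).enorm.pow_const p
  have hh : Measurable h := hD.const_mul _
  have hh_line : Measurable fun z : (E × ℝ) × E => h (lineMap z.1.1 z.2 z.1.2) := by
    simp_rw [lineMap_apply_module]
    fun_prop
  have segment_bound (x) (hx : x ∈ S) (y) (hy : y ∈ S) :
      ‖φ x - φ y‖ₑ ^ p ≤ ∫⁻ t in Ioc (0 : ℝ) 1, h (lineMap x y t) := by
    have segment_differentiable : ∀ z ∈ segment ℝ x y, DifferentiableAt ℝ φ z :=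
      fun z hz => hφ z (hS.segment_subset hx hy hz)
    refine (enorm_sub_rpow_le_mul_lintegral_enorm_fderiv_rpow hp segment_differentiable).trans
      (le_trans ?_ (lintegral_const_mul_le _ _))
    gcongr
    exact edist_le_ediam_of_mem hx hy
  calc ∫⁻ x in S, ∫⁻ y in S, ‖φ x - φ y‖ₑ ^ p ∂μ ∂μ
      ≤ ∫⁻ x in S, ∫⁻ y in S, (∫⁻ t in Ioc (0 : ℝ) 1, h (lineMap x y t)) ∂μ ∂μ :=
        setLIntegral_mono' hSm fun x hx => setLIntegral_mono' hSm (segment_bound x hx)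
    _ = ∫⁻ x in S, (∫⁻ t in Ioc (0 : ℝ) 1, (∫⁻ y in S, h (lineMap x y t) ∂μ)) ∂μ :=
        lintegral_congr fun x => lintegral_lintegral_swap <| Measurable.aemeasurable <| by
          simp_rw [Function.uncurry_def, lineMap_apply_module]
          fun_prop
    _ = ∫⁻ t in Ioc (0 : ℝ) 1, (∫⁻ x in S, ∫⁻ y in S, h (lineMap x y t) ∂μ ∂μ) :=
        lintegral_lintegral_swap hh_line.lintegral_prod_right'.aemeasurable
    _ ≤ ∫⁻ _ in Ioc (0 : ℝ) 1, 2 ^ finrank ℝ E * μ S * ∫⁻ u in S, h u ∂μ :=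
        setLIntegral_mono' measurableSet_Ioc fun t ht =>
          lintegral_lintegral_lineMap_le μ hS hSm hh (Ioc_subset_Icc_self ht)
    _ = 2 ^ finrank ℝ E * μ S * (ediam S ^ p * ∫⁻ x in S, ‖fderiv ℝ φ x‖ₑ ^ p ∂μ) := by
        rw [setLIntegral_const, lintegral_const_mul _ hD]
        simp

theorem lintegral_setLAverage_enorm_sub_rpow_le (hp : 1 ≤ p) (hS : Convex ℝ S)
    (hSm : MeasurableSet S) (hφ : ∀ x ∈ S, DifferentiableAt ℝ φ x) :
    ∫⁻ x in S, ⨍⁻ y in S, ‖φ x - φ y‖ₑ ^ p ∂μ ∂μ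
      ≤ 2 ^ finrank ℝ E * ediam S ^ p * ∫⁻ x in S, ‖fderiv ℝ φ x‖ₑ ^ p ∂μ := by
  rcases eq_or_ne (μ S) 0 with hμS | hμS
  · simp [Measure.restrict_eq_zero.2 hμS]
  simp_rw [setLAverage_eq, div_eq_mul_inv]
  rw [lintegral_mul_const' _ _ (ENNReal.inv_ne_top.2 hμS), ← div_eq_mul_inv]
  refine ENNReal.div_le_of_le_mul
    ((lintegral_lintegral_enorm_sub_rpow_le μ hp hS hSm hφ).trans_eq ?_)
  ring

theorem setLIntegral_mul_enorm_rpow_le (hp : 1 ≤ p) (hS : Convex ℝ S) (hSm : MeasurableSet S)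
    (hμS : μ S ≠ ∞) (hφ : ∀ x ∈ S, DifferentiableAt ℝ φ x) {w : E → ℝ≥0∞}
    (hw : AEMeasurable w (μ.restrict S)) (hw1 : ∀ x ∈ S, w x ≤ 1) :
    ∫⁻ x in S, w x * ‖φ x‖ₑ ^ p ∂μ
      ≤ 2 ^ (p - 1) * ((⨍⁻ x in S, w x ∂μ) * ∫⁻ x in S, ‖φ x‖ₑ ^ p ∂μ
        + 2 ^ finrank ℝ E * ediam S ^ p * ∫⁻ x in S, ‖fderiv ℝ φ x‖ₑ ^ p ∂μ) := by
  rcases eq_or_ne (μ S) 0 with hμS0 | hμS0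
  · simp [Measure.restrict_eq_zero.2 hμS0]
  have : NeZero (μ.restrict S) := ⟨by simpa using hμS0⟩
  have : IsFiniteMeasure (μ.restrict S) := isFiniteMeasure_restrict.2 hμS
  have φ_aemeas : AEMeasurable (fun x => ‖φ x‖ₑ ^ p) (μ.restrict S) :=
    (ContinuousOn.aestronglyMeasurable
      (fun x hx => (hφ x hx).continuousAt.continuousWithinAt) hSm).enorm.pow_const p
  set A := ⨍⁻ y in S, ‖φ y‖ₑ ^ p ∂μ
  have weighted_bound (x) (hx : x ∈ S) :
      w x * ‖φ x‖ₑ ^ p ≤ 2 ^ (p - 1) * (w x * A + ⨍⁻ y in S, ‖φ x - φ y‖ₑ ^ p ∂μ) := by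
    calc w x * ‖φ x‖ₑ ^ p
        ≤ w x * (2 ^ (p - 1) * (A + ⨍⁻ y in S, ‖φ x - φ y‖ₑ ^ p ∂μ)) := by
          gcongr; exact enorm_rpow_le_mul_laverage_add_laverage hp φ_aemeas (φ x)
      _ = 2 ^ (p - 1) * (w x * A + w x * ⨍⁻ y in S, ‖φ x - φ y‖ₑ ^ p ∂μ) := by ring
      _ ≤ 2 ^ (p - 1) * (w x * A + ⨍⁻ y in S, ‖φ x - φ y‖ₑ ^ p ∂μ) := by
          gcongr; exact mul_le_of_le_one_left' (hw1 x hx)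
  calc ∫⁻ x in S, w x * ‖φ x‖ₑ ^ p ∂μ
      ≤ ∫⁻ x in S, 2 ^ (p - 1) * (w x * A + ⨍⁻ y in S, ‖φ x - φ y‖ₑ ^ p ∂μ) ∂μ :=
        setLIntegral_mono' hSm weighted_bound
    _ = 2 ^ (p - 1) * ((∫⁻ x in S, w x ∂μ) * A
          + ∫⁻ x in S, ⨍⁻ y in S, ‖φ x - φ y‖ₑ ^ p ∂μ ∂μ) := by
        rw [lintegral_const_mul' _ _ (by simp), lintegral_add_left' (hw.mul_const A),
          lintegral_mul_const'' _ hw]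
    _ = 2 ^ (p - 1) * ((⨍⁻ x in S, w x ∂μ) * ∫⁻ x in S, ‖φ x‖ₑ ^ p ∂μ
          + ∫⁻ x in S, ⨍⁻ y in S, ‖φ x - φ y‖ₑ ^ p ∂μ ∂μ) := by
        simp only [A, setLAverage_eq, div_eq_mul_inv]
        ring
    _ ≤ _ := by
        gcongr
        exact lintegral_setLAverage_enorm_sub_rpow_le μ hp hS hSm hφ

theorem setLIntegral_iUnion_mul_enorm_rpow_le {ι : Type*} [Countable ι] {S : ι → Set E}
    (hp : 1 ≤ p) (hS : ∀ i, Convex ℝ (S i)) (hSm : ∀ i, MeasurableSet (S i))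
    (hSd : Pairwise (Function.onFun Disjoint S)) (hμS : ∀ i, μ (S i) ≠ ∞)
    (hφ : ∀ i, ∀ x ∈ S i, DifferentiableAt ℝ φ x) {w : E → ℝ≥0∞} (hw : AEMeasurable w μ)
    (hw1 : ∀ x, w x ≤ 1) {A D : ℝ≥0∞} (hA : ∀ i, ⨍⁻ x in S i, w x ∂μ ≤ A)
    (hD : ∀ i, ediam (S i) ≤ D) :
    ∫⁻ x in ⋃ i, S i, w x * ‖φ x‖ₑ ^ p ∂μ
      ≤ 2 ^ (p - 1) * (A * ∫⁻ x in ⋃ i, S i, ‖φ x‖ₑ ^ p ∂μ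
        + 2 ^ finrank ℝ E * D ^ p * ∫⁻ x in ⋃ i, S i, ‖fderiv ℝ φ x‖ₑ ^ p ∂μ) := by
  simp_rw [lintegral_iUnion hSm hSd, ← ENNReal.tsum_mul_left, ← ENNReal.tsum_add,
    ← ENNReal.tsum_mul_left]
  refine ENNReal.tsum_le_tsum fun i => (setLIntegral_mul_enorm_rpow_le μ hp (hS i) (hSm i) (hμS i)
    (hφ i) hw.restrict fun x _ => hw1 x).trans ?_
  gcongr
  · exact hA i
  · exact hD i

theorem setIntegral_iUnion_mul_norm_rpow_le {ι : Type*} [Countable ι] {S : ι → Set E}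
    (hp : 1 ≤ p) (hS : ∀ i, Convex ℝ (S i)) (hSm : ∀ i, MeasurableSet (S i))
    (hSd : Pairwise (Function.onFun Disjoint S)) (hSb : ∀ i, Bornology.IsBounded (S i))
    (hφ : ∀ i, ∀ x ∈ S i, DifferentiableAt ℝ φ x)
    (hφp : IntegrableOn (fun x => ‖φ x‖ ^ p) (⋃ i, S i) μ)
    (hDφp : IntegrableOn (fun x => ‖fderiv ℝ φ x‖ ^ p) (⋃ i, S i) μ) {q : E → ℝ}
    (hq : AEMeasurable q μ) (hq01 : ∀ x, q x ∈ Icc 0 1) {A D : ℝ} (hA0 : 0 ≤ A) (hD0 : 0 ≤ D)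
    (hA : ∀ i, ⨍ x in S i, q x ∂μ ≤ A) (hD : ∀ i, diam (S i) ≤ D) :
    ∫ x in ⋃ i, S i, q x * ‖φ x‖ ^ p ∂μ
      ≤ 2 ^ (p - 1) * (A * ∫ x in ⋃ i, S i, ‖φ x‖ ^ p ∂μ
        + 2 ^ finrank ℝ E * D ^ p * ∫ x in ⋃ i, S i, ‖fderiv ℝ φ x‖ ^ p ∂μ) := by
  have hp0 : 0 ≤ p := zero_le_one.trans hp
  have q_integrable (i : ι) : IntegrableOn q (S i) μ :=
    Measure.integrableOn_of_bounded (M := 1) (hSb i).measure_lt_top.ne hq.aestronglyMeasurable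
      (.of_forall fun x => (abs_of_nonneg (hq01 x).1).trans_le (hq01 x).2)
  have average_le (i : ι) : ⨍⁻ x in S i, ENNReal.ofReal (q x) ∂μ ≤ ENNReal.ofReal A := by
    rw [setLAverage_eq, ← ofReal_setAverage (q_integrable i) (.of_forall fun x => (hq01 x).1)]
    exact ENNReal.ofReal_le_ofReal (hA i)
  have ediam_le (i : ι) : ediam (S i) ≤ ENNReal.ofReal D :=
    (ENNReal.le_ofReal_iff_toReal_le (hSb i).ediam_ne_top hD0).2 (hD i)
  have weighted_eq (x : E) : ‖q x * ‖φ x‖ ^ p‖ₑ = ENNReal.ofReal (q x) * ‖φ x‖ₑ ^ p := by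
    rw [enorm_mul, Real.enorm_eq_ofReal (hq01 x).1, Real.enorm_rpow_of_nonneg (norm_nonneg _) hp0,
      enorm_norm]
  set I := ∫ x in ⋃ i, S i, ‖φ x‖ ^ p ∂μ with hI
  set J := ∫ x in ⋃ i, S i, ‖fderiv ℝ φ x‖ ^ p ∂μ with hJ
  have : 0 ≤ I := integral_nonneg fun x => by positivity
  have : 0 ≤ J := integral_nonneg fun x => by positivity
  rw [← ENNReal.ofReal_le_ofReal_iff (by positivity)]
  calc ENNReal.ofReal (∫ x in ⋃ i, S i, q x * ‖φ x‖ ^ p ∂μ)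
      ≤ ‖∫ x in ⋃ i, S i, q x * ‖φ x‖ ^ p ∂μ‖ₑ := Real.ofReal_le_enorm _
    _ ≤ ∫⁻ x in ⋃ i, S i, ‖q x * ‖φ x‖ ^ p‖ₑ ∂μ := enorm_integral_le_lintegral_enorm _
    _ ≤ 2 ^ (p - 1) * (ENNReal.ofReal A * ENNReal.ofReal I
          + 2 ^ finrank ℝ E * ENNReal.ofReal D ^ p * ENNReal.ofReal J) := by
        simp_rw [weighted_eq, hI, hJ, ofReal_integral_norm_rpow hp0 hφp,
          ofReal_integral_norm_rpow hp0 hDφp]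
        exact setLIntegral_iUnion_mul_enorm_rpow_le μ hp hS hSm hSd
          (fun i => (hSb i).measure_lt_top.ne) hφ hq.ennreal_ofReal
          (fun x => ENNReal.ofReal_le_one.2 (hq01 x).2) average_le ediam_le
    _ = ENNReal.ofReal (2 ^ (p - 1) * (A * I + 2 ^ finrank ℝ E * D ^ p * J)) := by
        rw [ENNReal.ofReal_mul (by positivity), ENNReal.ofReal_add (by positivity) (by positivity),
          ENNReal.ofReal_mul hA0, ENNReal.ofReal_mul (by positivity),
          ENNReal.ofReal_mul (by positivity), ENNReal.ofReal_rpow_of_nonneg hD0 hp0,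
          ENNReal.ofReal_pow zero_le_two, ← ENNReal.ofReal_rpow_of_pos two_pos,
          ENNReal.ofReal_ofNat]

theorem setIntegral_iUnion_ball_mul_norm_rpow_le {ι : Type*} {z : ι → E} {s κ : ℝ} (hp : 1 ≤ p)
    (hs : 0 < s) (hκ : 0 ≤ κ) (hz : Pairwise fun i j => s ≤ dist (z i) (z j))
    (hφ : ∀ i, ∀ x ∈ ball (z i) (s / 2), DifferentiableAt ℝ φ x)
    (hφp : IntegrableOn (fun x => ‖φ x‖ ^ p) (⋃ i, ball (z i) (s / 2)) μ)
    (hDφp : IntegrableOn (fun x => ‖fderiv ℝ φ x‖ ^ p) (⋃ i, ball (z i) (s / 2)) μ) {q : E → ℝ}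
    (hq : AEMeasurable q μ) (hq01 : ∀ x, q x ∈ Icc 0 1)
    (hqκ : ∀ i, ∫ x in ball (z i) (s / 2), q x ∂μ ≤ κ) :
    ∫ x in ⋃ i, ball (z i) (s / 2), q x * ‖φ x‖ ^ p ∂μ
      ≤ 2 ^ (p - 1) *
        (κ / μ.real (ball 0 (s / 2)) * ∫ x in ⋃ i, ball (z i) (s / 2), ‖φ x‖ ^ p ∂μ
          + 2 ^ finrank ℝ E * s ^ p
            * ∫ x in ⋃ i, ball (z i) (s / 2), ‖fderiv ℝ φ x‖ ^ p ∂μ) := by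
  have disjoint_balls : Pairwise (Function.onFun Disjoint fun i => ball (z i) (s / 2)) :=
    fun i j hij => ball_disjoint_ball (by linarith [hz hij])
  have : Countable ι := disjoint_balls.countable_of_isOpen_disjoint (fun i => isOpen_ball)
    fun i => nonempty_ball.2 (by positivity)
  refine setIntegral_iUnion_mul_norm_rpow_le μ hp (fun i => convex_ball _ _)
    (fun i => measurableSet_ball) disjoint_balls (fun i => isBounded_ball) hφ hφp hDφp hq hq01
    (by positivity) hs.le (fun i => ?_) fun i => ?_
  · rw [setAverage_eq, μ.addHaar_real_ball_center, smul_eq_mul, inv_mul_eq_div]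
    gcongr
    exact hqκ i
  · exact (diam_ball (by positivity)).trans_eq (mul_div_cancel₀ s two_ne_zero)

theorem poincare_on_disjoint_balls_general (hp : 1 ≤ p) :
    ∃ C : ℝ, 0 < C ∧
      ∀ (s κ : ℝ) {ι : Type*} (z : ι → E),
        0 < s → 0 ≤ κ →
        (∀ i j, i ≠ j → s ≤ ‖z i - z j‖) →
        ∀ q : E → ℝ, AEMeasurable q μ → (∀ x, 0 ≤ q x ∧ q x ≤ 1) →
          (∀ x : E, x ∉ ⋃ j, ball (z j) (s / 2) → q x = 0) →
          (∀ j, (∫ x in ball (z j) (s / 2), q x ∂μ) ≤ κ) →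
        ∀ φ : E → F, (∀ x ∈ ⋃ j, ball (z j) (s / 2), DifferentiableAt ℝ φ x) →
          Integrable (fun x => ‖φ x‖ ^ p) μ → Integrable (fun x => ‖fderiv ℝ φ x‖ ^ p) μ →
          (∫ x, q x * ‖φ x‖ ^ p ∂μ)
            ≤ C * ((κ / s ^ finrank ℝ E) * (∫ x, ‖φ x‖ ^ p ∂μ)
                + s ^ p * (∫ x, ‖fderiv ℝ φ x‖ ^ p ∂μ)) := by
  set v := μ.real (ball 0 1)
  have hv : 0 < v := ENNReal.toReal_pos (measure_ball_pos μ 0 one_pos).ne' measure_ball_lt_top.ne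
  refine ⟨2 ^ (p - 1) * 2 ^ finrank ℝ E * max v⁻¹ 1, by positivity,
    fun s κ ι z hs hκ hz q hq hq01 hq0 hqκ φ hφ hφp hDφp => ?_⟩
  set U := ⋃ i, ball (z i) (s / 2)
  have integral_U_le {f : E → ℝ} (hf0 : ∀ x, 0 ≤ f x) (hf : Integrable f μ) :
      ∫ x in U, f x ∂μ ≤ ∫ x, f x ∂μ := setIntegral_le_integral hf (.of_forall hf0)
  have hφ_U := integral_U_le (fun x => by positivity) hφp
  have hDφ_U := integral_U_le (fun x => by positivity) hDφp
  calc ∫ x, q x * ‖φ x‖ ^ p ∂μ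
      = ∫ x in U, q x * ‖φ x‖ ^ p ∂μ :=
        (setIntegral_eq_integral_of_forall_compl_eq_zero fun x hx => by simp [hq0 x hx]).symm
    _ ≤ 2 ^ (p - 1) * (κ / μ.real (ball 0 (s / 2)) * ∫ x in U, ‖φ x‖ ^ p ∂μ
          + 2 ^ finrank ℝ E * s ^ p * ∫ x in U, ‖fderiv ℝ φ x‖ ^ p ∂μ) :=
        setIntegral_iUnion_ball_mul_norm_rpow_le μ hp hs hκ
          (fun i j hij => by simpa only [dist_eq_norm] using hz i j hij)
          (fun i x hx => hφ x (mem_iUnion_of_mem i hx)) hφp.integrableOn hDφp.integrableOn hq hq01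
          hqκ
    _ ≤ 2 ^ (p - 1) * (κ / ((s / 2) ^ finrank ℝ E * v) * ∫ x, ‖φ x‖ ^ p ∂μ
          + 2 ^ finrank ℝ E * s ^ p * ∫ x, ‖fderiv ℝ φ x‖ ^ p ∂μ) := by
        rw [measureReal_ball_of_pos μ 0 (by positivity)]
        gcongr
    _ = 2 ^ (p - 1) * 2 ^ finrank ℝ E * (v⁻¹ * (κ / s ^ finrank ℝ E * ∫ x, ‖φ x‖ ^ p ∂μ)
          + 1 * (s ^ p * ∫ x, ‖fderiv ℝ φ x‖ ^ p ∂μ)) := by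
        rw [div_pow]
        field_simp
    _ ≤ 2 ^ (p - 1) * 2 ^ finrank ℝ E * (max v⁻¹ 1 * (κ / s ^ finrank ℝ E * ∫ x, ‖φ x‖ ^ p ∂μ)
          + max v⁻¹ 1 * (s ^ p * ∫ x, ‖fderiv ℝ φ x‖ ^ p ∂μ)) := by
        gcongr
        · exact le_max_left _ _
        · exact le_max_right _ _
    _ = _ := by ring

end Differentiable

lemma opNorm_sq_le_sum_norm_apply_sq {𝕜 E F ι : Type*} [RCLike 𝕜] [NormedAddCommGroup E]
    [InnerProductSpace 𝕜 E] [SeminormedAddCommGroup F] [NormedSpace 𝕜 F] [Fintype ι]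
    (b : OrthonormalBasis ι 𝕜 E) (L : E →L[𝕜] F) :
    ‖L‖ ^ 2 ≤ ∑ i, ‖L (b i)‖ ^ 2 := by
  refine (Real.le_sqrt (norm_nonneg L) ?_).1 (L.opNorm_le_bound (Real.sqrt_nonneg _) fun v => ?_)
  · positivity
  calc ‖L v‖ = ‖∑ i, inner 𝕜 (b i) v • L (b i)‖ := by
        simp_rw [← map_smul, ← map_sum, b.sum_repr']
    _ ≤ ∑ i, ‖L (b i)‖ * ‖inner 𝕜 (b i) v‖ := by
        refine (norm_sum_le _ _).trans_eq ?_
        simp_rw [norm_smul, mul_comm]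
    _ ≤ √(∑ i, ‖L (b i)‖ ^ 2) * √(∑ i, ‖inner 𝕜 (b i) v‖ ^ 2) :=
        Real.sum_mul_le_sqrt_mul_sqrt _ _ _
    _ = √(∑ i, ‖L (b i)‖ ^ 2) * ‖v‖ := by
        rw [b.sum_sq_norm_inner_right, Real.sqrt_sq (norm_nonneg v)]

lemma norm_fderiv_sq_le_gradNormSq3 (φ : E3 → ℂ) (x : E3) :
    ‖fderiv ℝ φ x‖ ^ 2 ≤ gradNormSq3 φ x := by
  simpa [gradNormSq3] using
    opNorm_sq_le_sum_norm_apply_sq (EuclideanSpace.basisFun (Fin 3) ℝ) (fderiv ℝ φ x)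

lemma integrable_gradNormSq3 {φ : E3 → ℂ} (hφ : ContDiff ℝ 1 φ) (hφc : HasCompactSupport φ) :
    Integrable (gradNormSq3 φ) := by
  have partial_continuous (v : E3) : Continuous fun x => fderiv ℝ φ x v :=
    (hφ.continuous_fderiv one_ne_zero).clm_apply continuous_const
  exact integrable_finsetSum _ fun a _ => ((partial_continuous _).memLp_of_hasCompactSupport
    (hφc.fderiv_apply ℝ _)).integrable_norm_pow two_ne_zero

theorem poincare_on_disjoint_balls :
    ∃ C : ℝ, 0 < C ∧
      ∀ (s κ : ℝ) (k : ℕ) (z : Fin k → E3),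
        0 < s → 0 ≤ κ →
        (∀ i j, i ≠ j → s ≤ ‖z i - z j‖) →
        ∀ q : E3 → ℝ, Measurable q → (∀ x, 0 ≤ q x ∧ q x ≤ 1) →
          (∀ x : E3, x ∉ ⋃ j, Metric.ball (z j) (s / 2) → q x = 0) →
          (∀ j, (∫ x in Metric.ball (z j) (s / 2), q x) ≤ κ) →
        ∀ φ : E3 → ℂ, ContDiff ℝ (⊤ : ℕ∞) φ → HasCompactSupport φ →
          (∫ x : E3, q x * ‖φ x‖ ^ 2)
            ≤ C * ((κ / s ^ 3) * (∫ x : E3, ‖φ x‖ ^ 2)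
                + s ^ 2 * (∫ x : E3, gradNormSq3 φ x)) := by
  obtain ⟨C, hC, bound⟩ := poincare_on_disjoint_balls_general (F := ℂ) (volume : Measure E3)
    one_le_two
  simp only [Real.rpow_two, finrank_euclideanSpace_fin] at bound
  refine ⟨C, hC, fun s κ k z hs hκ hz q hq hq01 hq0 hqκ φ hφ hφc => ?_⟩
  have hφ1 : ContDiff ℝ 1 φ := hφ.of_le (mod_cast le_top)
  have φ_memLp : MemLp φ 2 := hφ1.continuous.memLp_of_hasCompactSupport hφc
  have fderiv_memLp : MemLp (fderiv ℝ φ) 2 :=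
    (hφ1.continuous_fderiv one_ne_zero).memLp_of_hasCompactSupport (hφc.fderiv ℝ)
  refine (bound s κ z hs hκ hz q hq.aemeasurable hq01 hq0 hqκ φ
    (fun x _ => hφ1.differentiable one_ne_zero x)
    (φ_memLp.integrable_norm_pow two_ne_zero)
    (fderiv_memLp.integrable_norm_pow two_ne_zero)).trans ?_
  gcongr
  · exact fderiv_memLp.integrable_norm_pow two_ne_zero
  · exact integrable_gradNormSq3 hφ1 hφc
  · exact fun x => norm_fderiv_sq_le_gradNormSq3 φ x
end
end

section
/- There exists a constant C, independent of all parameters below, with the following property. Let ℓ > 0, n, m ≥ 1, s > 0. Let P ⊂ (π/ℓ)·{1,2,3,…}³ with |P| = n be such that |p| ≤ |q| for every p ∈ P and every q ∈ (π/ℓ)·{1,2,3,…}³ ∖ P. For p ∈ P let φ_p(x) = (2/ℓ)^{3/2} ∏_{a=1}^3 sin(p_a x_a) for x ∈ [0,ℓ]³ and φ_p(x) = 0 otherwise, and let D_n(x₁,…,xₙ) = (n!)^{−1/2} det[φ_p(x_i)]_{p∈P, 1≤i≤n}. Fix y₁,…,y_m ∈ ℝ³, let f : ℝ³ → [0,1]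 be measurable, set F(x₁,…,xₙ) = ∏_{i=1}^n ∏_{j=1}^m f(x_i − y_j), and let M be the n×n matrix M_{pq} = ∫ φ_p(x) φ_q(x) ∏_{j=1}^m f(x − y_j)² dx; assume M is invertible. Let g : ℝ³ → [0,1] be measurable with g(x) = 1 for |x| ≥ 2s, and set G_n(x₁,…,xₙ) = ∏_{1≤i<j≤n} g(x_i − x_j). Then ∫_{(ℝ³)ⁿ} D_n(X)² F(X)² G_n(X)² dX ≥ ( 1 − C n^{8/3} ‖M^{−1}‖² (s/ℓ)⁵ ) ∫_{(ℝ³)ⁿ} D_n(X)² F(X)² dX. -/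
noncomputable section

open MeasureTheory Real
open scoped BigOperators

/-- The Dirichlet eigenfunction of the Laplacian on the cube `[0,ℓ]³` with quantum
numbers `m ∈ {1,2,…}³`, extended by zero outside the cube. -/
def dirichletEig (ℓ : ℝ) (m : Fin 3 → ℕ) (x : E3) : ℝ :=
  Set.indicator {x : E3 | ∀ a, 0 ≤ x a ∧ x a ≤ ℓ}
    (fun x => (2 / ℓ) ^ ((3:ℝ)/2) * ∏ a : Fin 3, Real.sin (π * (m a : ℝ) / ℓ * x a)) x

/-- The (real) Slater determinant `(n!)^{-1/2} det[φ_α(x_i)]`. -/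
def slaterDR {n : ℕ} (φ : Fin n → E3 → ℝ) (X : Fin n → E3) : ℝ :=
  ((Nat.factorial n : ℝ) ^ (-(1:ℝ)/2)) * Matrix.det (Matrix.of fun α i => φ α (X i))

/-- Operator (ℓ²) norm of a square real matrix. -/
def matOpNormR {n : ℕ} (A : Matrix (Fin n) (Fin n) ℝ) : ℝ :=
  ‖Matrix.toEuclideanCLM (𝕜 := ℝ) A‖

/-!
Write `Φ` for the vector of weighted orbitals, `M` for its Gram matrix and `D` for the Slater
determinant of `Φ`. Since `G² ≥ 1 - ∑_{i ≠ j} 1{|x_i - x_j| < r}`, it suffices to bound the expected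
number of close ordered pairs under the probability density `D² / ∫ D²`. Orthonormalising the
orbitals by `N` with `M⁻¹ = Nᵀ N`, this expectation equals the integral over `{|x - y| < r}` of the
`2 × 2` Gram determinant of `Φ(x)`, `Φ(y)` for the form `M⁻¹`. A Gram determinant does not change
when `v` is replaced by `v - u`, so without the weights, which only contribute a factor of absolute
value at most `1`, it is at most `‖M⁻¹‖² |φ(x)|² |φ(y) - φ(x)|²`. Here `|φ(x)|² ≲ n / ℓ³` and, the
orbitals being Lipschitz, `|φ(y) - φ(x)|² ≲ E r² / ℓ⁵` with `E` the sum of the squared quantum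
numbers. The region has volume of order `ℓ³ r³`, and minimality of the momenta forces
`E ≲ n · n^{2/3}`.
-/

section SlaterJastrow

open Matrix Equiv Finset
open scoped Nat

lemma perm_eq_one_or_eq_swap {ι : Type*} [DecidableEq ι] {i j : ι} {τ : Perm ι}
    (h : ∀ k, k ≠ i → k ≠ j → τ k = k) : τ = 1 ∨ τ = swap i j := by
  have hi : τ i = i ∨ τ i = j := by
    by_contra! hc
    exact hc.1 (τ.injective (h _ hc.1 hc.2))
  have hj : τ j = i ∨ τ j = j := by
    by_contra! hc
    exact hc.2 (τ.injective (h _ hc.1 hc.2))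
  have := τ.injective.eq_iff (a := i) (b := j)
  by_cases hτ : τ i = i
  · left
    ext k
    by_cases k = i <;> by_cases k = j <;> grind [Perm.one_apply]
  · right
    ext k
    grind

section pairMarginals

variable {α : Type*} [MeasurableSpace α]

/-- The measurable equivalence singling out coordinate `i` and then coordinate `j` of the remaining
ones, i.e. coordinate `i.succAbove j`, so that a pair of variables can be integrated separately. -/
def piFinPairEquiv {n : ℕ} (i : Fin (n + 2)) (j : Fin (n + 1)) :
    (Fin (n + 2) → α) ≃ᵐ (α × α) × (Fin n → α) :=
  ((MeasurableEquiv.piFinSuccAbove (fun _ => α) i).trans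
    ((MeasurableEquiv.refl α).prodCongr (MeasurableEquiv.piFinSuccAbove (fun _ => α) j))).trans
    MeasurableEquiv.prodAssoc.symm

lemma piFinPairEquiv_apply {n : ℕ} (i : Fin (n + 2)) (j : Fin (n + 1)) (X : Fin (n + 2) → α) :
    piFinPairEquiv i j X =
      ((X i, X (i.succAbove j)), fun k => X (i.succAbove (j.succAbove k))) := rfl

variable (μ : Measure α) [SigmaFinite μ]

lemma measurePreserving_piFinPairEquiv {n : ℕ} (i : Fin (n + 2)) (j : Fin (n + 1)) :
    MeasurePreserving (piFinPairEquiv i j) (Measure.pi fun _ => μ)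
      ((μ.prod μ).prod (Measure.pi fun _ => μ)) :=
  ((measurePreserving_prodAssoc μ μ (Measure.pi fun _ : Fin n => μ)).symm _).comp <|
    ((MeasurePreserving.id μ).prod (measurePreserving_piFinSuccAbove (fun _ => μ) j)).comp
      (measurePreserving_piFinSuccAbove (fun _ => μ) i)

lemma setIntegral_pi_fin_pair {𝕜 : Type*} [RCLike 𝕜] {n : ℕ} {i j : Fin n} (hij : i ≠ j)
    (R : Set (α × α)) (u : Fin n → α → 𝕜) :
    ∫ X in {X : Fin n → α | (X i, X j) ∈ R}, ∏ k, u k (X k) ∂(Measure.pi fun _ => μ) =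
      (∫ z in R, u i z.1 * u j z.2 ∂(μ.prod μ)) * ∏ k ∈ {i, j}ᶜ, ∫ x, u k x ∂μ := by
  obtain ⟨n, rfl⟩ : ∃ m, n = m + 2 := by
    obtain ⟨i, hi⟩ := i; obtain ⟨j, hj⟩ := j
    exact ⟨n - 2, by grind⟩
  obtain ⟨j, rfl⟩ := Fin.exists_succAbove_eq hij.symm
  have hcompl (f : Fin (n + 2) → 𝕜) :
      ∏ k ∈ {i, i.succAbove j}ᶜ, f k = ∏ k, f (i.succAbove (j.succAbove k)) := by
    rw [← Fintype.prod_ite_mem, Fin.prod_univ_succAbove _ i, Fin.prod_univ_succAbove _ j]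
    simp [Fin.succAbove_ne]
  have hpre : {X : Fin (n + 2) → α | (X i, X (i.succAbove j)) ∈ R} =
      piFinPairEquiv i j ⁻¹' (R ×ˢ Set.univ) := by
    ext X; simp [piFinPairEquiv_apply]
  have hprod (X : Fin (n + 2) → α) : ∏ k, u k (X k) =
      (fun Y : (α × α) × (Fin n → α) => (u i Y.1.1 * u (i.succAbove j) Y.1.2) *
        ∏ k, u (i.succAbove (j.succAbove k)) (Y.2 k)) (piFinPairEquiv i j X) := by
    simp only [piFinPairEquiv_apply, Fin.prod_univ_succAbove _ i, Fin.prod_univ_succAbove _ j,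
      mul_assoc]
  simp only [hpre, hprod]
  rw [(measurePreserving_piFinPairEquiv μ i j).setIntegral_preimage_emb
      (piFinPairEquiv i j).measurableEmbedding fun Y =>
        (u i Y.1.1 * u (i.succAbove j) Y.1.2) * ∏ k, u (i.succAbove (j.succAbove k)) (Y.2 k),
    setIntegral_prod_mul (fun z : α × α => u i z.1 * u (i.succAbove j) z.2)
      (fun Y : Fin n → α => ∏ k, u (i.succAbove (j.succAbove k)) (Y k)), setIntegral_univ,
    integral_fintype_prod_eq_prod fun k => u (i.succAbove (j.succAbove k)), hcompl]

lemma setIntegral_pi_pair {𝕜 ι : Type*} [RCLike 𝕜] [Fintype ι] [DecidableEq ι] {i j : ι}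
    (hij : i ≠ j) (R : Set (α × α)) (u : ι → α → 𝕜) :
    ∫ X in {X : ι → α | (X i, X j) ∈ R}, ∏ k, u k (X k) ∂(Measure.pi fun _ => μ) =
      (∫ z in R, u i z.1 * u j z.2 ∂(μ.prod μ)) * ∏ k ∈ {i, j}ᶜ, ∫ x, u k x ∂μ := by
  let e := Fintype.equivFin ι
  let E := MeasurableEquiv.piCongrLeft (fun _ : ι => α) e.symm
  have hE (X : Fin (Fintype.card ι) → α) (k : ι) : E X k = X (e k) := by
    simp [E, MeasurableEquiv.piCongrLeft, Equiv.piCongrLeft_apply]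
  have hset : E ⁻¹' {X | (X i, X j) ∈ R} = {X | (X (e i), X (e j)) ∈ R} := by
    ext X; simp [hE]
  rw [← (measurePreserving_piCongrLeft (fun _ => μ) e.symm).setIntegral_preimage_emb
      E.measurableEmbedding, hset,
    Finset.prod_equiv e (t := {e i, e j}ᶜ) (g := fun k => ∫ x, u (e.symm k) x ∂μ) (by simp)
      (by simp)]
  convert setIntegral_pi_fin_pair μ (e.injective.ne hij) R fun k => u (e.symm k) using 3
  · exact Fintype.prod_equiv e _ _ fun k => by simp [hE, E]
  · simp

end pairMarginals

lemma setIntegral_biUnion_finset_le {α ι : Type*} [MeasurableSpace α] {μ : Measure α}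
    (t : Finset ι) (S : ι → Set α) {f : α → ℝ} (hf : Integrable f μ) (hf0 : 0 ≤ f) :
    ∫ x in ⋃ i ∈ t, S i, f x ∂μ ≤ ∑ i ∈ t, ∫ x in S i, f x ∂μ := by
  rw [← integral_finsetSum_measure fun i _ => hf.integrableOn]
  refine integral_mono_measure ?_ (.of_forall hf0) ?_
  · refine (Measure.restrict_biUnion_le t.countable_toSet).trans_eq ?_
    exact Measure.sum_coe_finset t fun i => μ.restrict (S i)
  · exact integrable_finsetSum_measure.2 fun i _ => hf.integrableOn

section configMatrix

variable {α ι : Type*}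

/-- The matrix whose column `i` is the orbital vector `Φ` at the position `X i` of particle `i`; its
determinant is the unnormalised Slater determinant. -/
def configMatrix (Φ : α → ι → ℝ) (X : ι → α) : Matrix ι ι ℝ :=
  of fun a i => Φ (X i) a

lemma configMatrix_mulVec [Fintype ι] (Φ : α → ι → ℝ) (N : Matrix ι ι ℝ) (X : ι → α) :
    configMatrix (fun x => N *ᵥ Φ x) X = N * configMatrix Φ X := rfl

variable [Fintype ι] [DecidableEq ι]

-- Only one factor is expanded; the sign is absorbed by permuting the rows of the other one, which
-- leaves diagonal terms of the permuted orbitals.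
lemma det_configMatrix_sq (Φ : α → ι → ℝ) (X : ι → α) :
    (configMatrix Φ X).det ^ 2 =
      ∑ σ : Perm ι, (∏ k, Φ (X k) (σ k)) * (configMatrix (fun x => Φ x ∘ σ) X).det := by
  have hσ (σ : Perm ι) : (configMatrix (fun x => Φ x ∘ σ) X).det =
      Perm.sign σ * (configMatrix Φ X).det := det_permute σ (configMatrix Φ X)
  nth_rw 1 [sq, det_apply']
  simp_rw [hσ, sum_mul]
  exact sum_congr rfl fun σ _ => by simp only [configMatrix, of_apply]; ring

lemma diagonal_mul_det (Φ : α → ι → ℝ) (X : ι → α) :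
    (∏ k, Φ (X k) k) * (configMatrix Φ X).det =
      ∑ τ : Perm ι, (Perm.sign τ : ℝ) * ∏ k, Φ (X k) k * Φ (X k) (τ k) := by
  rw [det_apply', mul_sum]
  exact sum_congr rfl fun τ _ => by
    simp only [configMatrix, of_apply, prod_mul_distrib]; ring

end configMatrix

section gramMatrix

variable {α ι : Type*} [MeasurableSpace α]

/-- The Gram matrix in `L²(μ)` of the coordinate functions of `Φ`. It is defined by integrals of
products, so an entry is `0` when the product is not integrable. -/
def gramMatrix (μ : Measure α) (Φ : α → ι → ℝ) : Matrix ι ι ℝ :=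
  of fun a b => ∫ x, Φ x a * Φ x b ∂μ

variable {μ : Measure α} {Φ : α → ι → ℝ}

lemma gramMatrix_comp_perm (σ : Perm ι) :
    gramMatrix μ (fun x => Φ x ∘ σ) = (gramMatrix μ Φ).submatrix σ σ := rfl

lemma gramMatrix_posSemidef [Finite ι] (hΦ : ∀ a, MemLp (fun x => Φ x a) 2 μ) :
    (gramMatrix μ Φ).PosSemidef := by
  have hgram : gramMatrix μ Φ = gram ℝ fun a => (hΦ a).toLp := by
    ext a b
    rw [gram_apply, L2.inner_def]
    refine integral_congr_ae ?_
    filter_upwards [(hΦ a).coeFn_toLp, (hΦ b).coeFn_toLp] with x ha hb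
    simp [ha, hb, mul_comm]
  rw [hgram]
  exact posSemidef_gram ℝ _

variable [Fintype ι]

lemma gramMatrix_mulVec (hΦ : ∀ a, MemLp (fun x => Φ x a) 2 μ) (N : Matrix ι ι ℝ) :
    gramMatrix μ (fun x => N *ᵥ Φ x) = N * gramMatrix μ Φ * Nᵀ := by
  have hint (a b c d) : Integrable (fun x => N a c * N b d * (Φ x c * Φ x d)) μ :=
    ((hΦ c).integrable_mul (hΦ d)).const_mul _
  ext a b
  calc ∫ x, (N *ᵥ Φ x) a * (N *ᵥ Φ x) b ∂μ
      = ∫ x, ∑ c, ∑ d, N a c * N b d * (Φ x c * Φ x d) ∂μ := by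
        simp only [mulVec, dotProduct, sum_mul_sum, mul_mul_mul_comm]
    _ = ∑ c, ∑ d, N a c * N b d * gramMatrix μ Φ c d := by
        rw [integral_finsetSum _ fun c _ => integrable_finsetSum _ fun d _ => hint a b c d]
        simp_rw [integral_finsetSum _ fun d _ => hint a b _ d, integral_const_mul]
        rfl
    _ = (N * gramMatrix μ Φ * Nᵀ) a b := by
        simp only [mul_apply, transpose_apply, sum_mul]
        rw [sum_comm]
        exact sum_congr rfl fun d _ => sum_congr rfl fun c _ => by ring

variable [SigmaFinite μ]

lemma integrable_prod_mul_perm (hΦ : ∀ a, MemLp (fun x => Φ x a) 2 μ) (τ : Perm ι) :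
    Integrable (fun X : ι → α => ∏ k, Φ (X k) k * Φ (X k) (τ k)) (Measure.pi fun _ => μ) :=
  .fintype_prod (f := fun k x => Φ x k * Φ x (τ k)) fun k => (hΦ k).integrable_mul (hΦ (τ k))

variable [DecidableEq ι]

lemma integrable_diagonal_mul_det (hΦ : ∀ a, MemLp (fun x => Φ x a) 2 μ) :
    Integrable (fun X : ι → α => (∏ k, Φ (X k) k) * (configMatrix Φ X).det)
      (Measure.pi fun _ => μ) := by
  simp_rw [diagonal_mul_det]
  exact integrable_finsetSum _ fun τ _ => (integrable_prod_mul_perm hΦ τ).const_mul _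

lemma integrable_det_configMatrix_sq (hΦ : ∀ a, MemLp (fun x => Φ x a) 2 μ) :
    Integrable (fun X => (configMatrix Φ X).det ^ 2) (Measure.pi fun _ => μ) := by
  simp_rw [det_configMatrix_sq]
  exact integrable_finsetSum _ fun σ _ =>
    integrable_diagonal_mul_det (Φ := fun x => Φ x ∘ σ) fun a => hΦ (σ a)

lemma setIntegral_det_configMatrix_sq (hΦ : ∀ a, MemLp (fun x => Φ x a) 2 μ)
    (S : Set (ι → α)) :
    ∫ X in S, (configMatrix Φ X).det ^ 2 ∂(Measure.pi fun _ => μ) = ∑ σ : Perm ι,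
      ∫ X in S, (∏ k, Φ (X k) (σ k)) * (configMatrix (fun x => Φ x ∘ σ) X).det
        ∂(Measure.pi fun _ => μ) := by
  simp_rw [det_configMatrix_sq]
  exact integral_finsetSum _ fun σ _ => (integrable_diagonal_mul_det (Φ := fun x => Φ x ∘ σ)
    fun a => hΦ (σ a)).integrableOn

lemma setIntegral_diagonal_mul_det (hΦ : ∀ a, MemLp (fun x => Φ x a) 2 μ) (S : Set (ι → α)) :
    ∫ X in S, (∏ k, Φ (X k) k) * (configMatrix Φ X).det ∂(Measure.pi fun _ => μ) =
      ∑ τ : Perm ι, (Perm.sign τ : ℝ) *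
        ∫ X in S, ∏ k, Φ (X k) k * Φ (X k) (τ k) ∂(Measure.pi fun _ => μ) := by
  simp_rw [diagonal_mul_det]
  rw [integral_finsetSum _ fun τ _ => ((integrable_prod_mul_perm hΦ τ).const_mul _).integrableOn]
  simp_rw [integral_const_mul]

lemma integral_diagonal_mul_det (hΦ : ∀ a, MemLp (fun x => Φ x a) 2 μ) :
    ∫ X, (∏ k, Φ (X k) k) * (configMatrix Φ X).det ∂(Measure.pi fun _ => μ) =
      (gramMatrix μ Φ).det := by
  rw [← setIntegral_univ, setIntegral_diagonal_mul_det hΦ, ← det_transpose, det_apply']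
  refine sum_congr rfl fun τ _ => ?_
  rw [setIntegral_univ, integral_fintype_prod_eq_prod fun k x => Φ x k * Φ x (τ k)]
  rfl

theorem integral_det_configMatrix_sq (hΦ : ∀ a, MemLp (fun x => Φ x a) 2 μ) :
    ∫ X, (configMatrix Φ X).det ^ 2 ∂(Measure.pi fun _ => μ) =
      (Fintype.card ι)! * (gramMatrix μ Φ).det := by
  have hperm (σ : Perm ι) : ∫ X, (∏ k, Φ (X k) (σ k)) *
      (configMatrix (fun x => Φ x ∘ σ) X).det ∂(Measure.pi fun _ => μ) = (gramMatrix μ Φ).det :=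
    (integral_diagonal_mul_det (Φ := fun x => Φ x ∘ σ) fun a => hΦ (σ a)).trans <| by
      rw [gramMatrix_comp_perm, det_submatrix_equiv_self]
  rw [← setIntegral_univ, setIntegral_det_configMatrix_sq hΦ]
  simp [hperm, Fintype.card_perm]

lemma setIntegral_prod_mul_perm_pair (hG : gramMatrix μ Φ = 1) {i j : ι} (hij : i ≠ j)
    (R : Set (α × α)) (τ : Perm ι) :
    ∫ X in {X : ι → α | (X i, X j) ∈ R}, ∏ k, Φ (X k) k * Φ (X k) (τ k)
        ∂(Measure.pi fun _ => μ) =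
      if ∀ k, k ≠ i → k ≠ j → τ k = k then
        ∫ z in R, Φ z.1 i * Φ z.1 (τ i) * (Φ z.2 j * Φ z.2 (τ j)) ∂(μ.prod μ) else 0 := by
  have hG' (k : ι) : ∫ x, Φ x k * Φ x (τ k) ∂μ = if τ k = k then 1 else 0 := by
    simp only [← one_apply, eq_comm (a := τ k), ← hG]
    rfl
  rw [setIntegral_pi_pair μ hij R fun k x => Φ x k * Φ x (τ k)]
  simp [hG', prod_ite_zero]

lemma setIntegral_diagonal_mul_det_pair (hΦ : ∀ a, MemLp (fun x => Φ x a) 2 μ)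
    (hG : gramMatrix μ Φ = 1) {i j : ι} (hij : i ≠ j) (R : Set (α × α)) :
    ∫ X in {X : ι → α | (X i, X j) ∈ R}, (∏ k, Φ (X k) k) * (configMatrix Φ X).det
        ∂(Measure.pi fun _ => μ) =
      ∫ z in R, (Φ z.1 i * Φ z.2 j) ^ 2 - Φ z.1 i * Φ z.2 i * (Φ z.1 j * Φ z.2 j)
        ∂(μ.prod μ) := by
  have hint (τ : Perm ι) : IntegrableOn
      (fun z : α × α => Φ z.1 i * Φ z.1 (τ i) * (Φ z.2 j * Φ z.2 (τ j))) R (μ.prod μ) :=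
    (((hΦ i).integrable_mul (hΦ (τ i))).mul_prod
      ((hΦ j).integrable_mul (hΦ (τ j)))).integrableOn
  calc _ = ∑ τ ∈ {1, swap i j}, (Perm.sign τ : ℝ) *
          ∫ X in {X : ι → α | (X i, X j) ∈ R}, ∏ k, Φ (X k) k * Φ (X k) (τ k)
            ∂(Measure.pi fun _ => μ) := by
        rw [setIntegral_diagonal_mul_det hΦ]
        refine (sum_subset (subset_univ _) fun τ _ hτ => ?_).symm
        rw [setIntegral_prod_mul_perm_pair hG hij, if_neg, mul_zero]
        exact fun h => hτ (by simpa using perm_eq_one_or_eq_swap h)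
    _ = ∫ z in R, Φ z.1 i * Φ z.1 i * (Φ z.2 j * Φ z.2 j) ∂(μ.prod μ) -
          ∫ z in R, Φ z.1 i * Φ z.1 j * (Φ z.2 j * Φ z.2 i) ∂(μ.prod μ) := by
        rw [sum_pair (mt (swap_eq_one_iff.1 ·.symm) hij), setIntegral_prod_mul_perm_pair hG hij,
          setIntegral_prod_mul_perm_pair hG hij, if_pos (by simp),
          if_pos fun _ => swap_apply_of_ne_of_ne, Perm.sign_swap hij]
        simp [sub_eq_add_neg]
    _ = _ := by
        rw [← integral_sub (by simpa using (hint 1).integrable)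
          (by simpa using (hint (swap i j)).integrable)]
        congr! 2 with z
        ring

lemma setIntegral_det_configMatrix_sq_pair (hΦ : ∀ a, MemLp (fun x => Φ x a) 2 μ)
    (hG : gramMatrix μ Φ = 1) {i j : ι} (hij : i ≠ j) (R : Set (α × α)) :
    ∫ X in {X : ι → α | (X i, X j) ∈ R}, (configMatrix Φ X).det ^ 2 ∂(Measure.pi fun _ => μ) =
      ∑ σ : Perm ι, ∫ z in R, (Φ z.1 (σ i) * Φ z.2 (σ j)) ^ 2 -
        Φ z.1 (σ i) * Φ z.2 (σ i) * (Φ z.1 (σ j) * Φ z.2 (σ j)) ∂(μ.prod μ) := by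
  rw [setIntegral_det_configMatrix_sq hΦ]
  exact sum_congr rfl fun σ _ => setIntegral_diagonal_mul_det_pair (Φ := fun x => Φ x ∘ σ)
    (fun a => hΦ (σ a)) (by rw [gramMatrix_comp_perm, hG, submatrix_one_equiv]) hij R

end gramMatrix

section gramDet

variable {ι : Type*} [Fintype ι]

/-- The Gram determinant of `u` and `v` for the bilinear form of `A`; for `A` symmetric it is
`det !![u ⬝ᵥ A *ᵥ u, u ⬝ᵥ A *ᵥ v; v ⬝ᵥ A *ᵥ u, v ⬝ᵥ A *ᵥ v]`. -/
def gramDet (A : Matrix ι ι ℝ) (u v : ι → ℝ) : ℝ :=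
  (u ⬝ᵥ A *ᵥ u) * (v ⬝ᵥ A *ᵥ v) - (u ⬝ᵥ A *ᵥ v) ^ 2

lemma gramDet_one [DecidableEq ι] (u v : ι → ℝ) :
    gramDet 1 u v = ∑ a, ∑ b, ((u a * v b) ^ 2 - u a * v a * (u b * v b)) := by
  simp only [gramDet, one_mulVec, dotProduct, sq, sum_mul_sum, sum_sub_distrib, mul_mul_mul_comm]

lemma gramDet_one_mulVec [DecidableEq ι] (N : Matrix ι ι ℝ) (u v : ι → ℝ) :
    gramDet 1 (N *ᵥ u) (N *ᵥ v) = gramDet (Nᵀ * N) u v := by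
  have h (u v : ι → ℝ) : N *ᵥ u ⬝ᵥ N *ᵥ v = u ⬝ᵥ (Nᵀ * N) *ᵥ v := by
    rw [← mulVec_mulVec, dotProduct_mulVec u, vecMul_transpose]
  simp only [gramDet, one_mulVec, h]

lemma gramDet_smul (A : Matrix ι ι ℝ) (c d : ℝ) (u v : ι → ℝ) :
    gramDet A (c • u) (d • v) = c ^ 2 * d ^ 2 * gramDet A u v := by
  simp only [gramDet, mulVec_smul, dotProduct_smul, smul_dotProduct, smul_eq_mul]
  ring

lemma gramDet_zero_left (A : Matrix ι ι ℝ) (v : ι → ℝ) : gramDet A 0 v = 0 := by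
  simp [gramDet]

lemma gramDet_zero_right (A : Matrix ι ι ℝ) (u : ι → ℝ) : gramDet A u 0 = 0 := by
  simp [gramDet]

lemma gramDet_sub_right {A : Matrix ι ι ℝ} (hA : A.IsSymm) (u v : ι → ℝ) :
    gramDet A u (v - u) = gramDet A u v := by
  have hsymm : v ⬝ᵥ A *ᵥ u = u ⬝ᵥ A *ᵥ v := by
    rw [dotProduct_mulVec, ← mulVec_transpose, hA, dotProduct_comm]
  simp only [gramDet, mulVec_sub, dotProduct_sub, sub_dotProduct, hsymm]
  ring

lemma abs_dotProduct_mulVec_le [DecidableEq ι] (A : Matrix ι ι ℝ) (u v : ι → ℝ) :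
    |u ⬝ᵥ A *ᵥ v| ≤ ‖toEuclideanCLM (𝕜 := ℝ) A‖ * (√(u ⬝ᵥ u) * √(v ⬝ᵥ v)) := by
  have hnorm (w : ι → ℝ) : ‖WithLp.toLp 2 w‖ = √(w ⬝ᵥ w) := by
    simp [EuclideanSpace.norm_eq, dotProduct, sq]
  have hinner := inner_toEuclideanCLM A (WithLp.toLp 2 u) (WithLp.toLp 2 v)
  rw [← hnorm, ← hnorm, show u ⬝ᵥ A *ᵥ v = _ from hinner.symm, mul_left_comm]
  exact (abs_real_inner_le_norm _ _).trans
    (mul_le_mul_of_nonneg_left (ContinuousLinearMap.le_opNorm _ _) (norm_nonneg _))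

lemma abs_gramDet_le [DecidableEq ι] {A : Matrix ι ι ℝ} (hA : A.PosSemidef) (u v : ι → ℝ) :
    |gramDet A u v| ≤ ‖toEuclideanCLM (𝕜 := ℝ) A‖ ^ 2 * (u ⬝ᵥ u) * ((v - u) ⬝ᵥ (v - u)) := by
  have hself (w : ι → ℝ) : 0 ≤ w ⬝ᵥ w := sum_nonneg fun a _ => mul_self_nonneg (w a)
  have hpos (w : ι → ℝ) : 0 ≤ w ⬝ᵥ A *ᵥ w := by simpa using hA.dotProduct_mulVec_nonneg w
  have hdiag (w : ι → ℝ) : w ⬝ᵥ A *ᵥ w ≤ ‖toEuclideanCLM (𝕜 := ℝ) A‖ * (w ⬝ᵥ w) := by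
    simpa [hself] using (le_abs_self _).trans (abs_dotProduct_mulVec_le A w w)
  rw [← gramDet_sub_right (by simpa using hA.1)]
  refine abs_sub_le_of_nonneg_of_le (mul_nonneg (hpos _) (hpos _)) ?_ (sq_nonneg _) ?_
  · exact (mul_le_mul (hdiag _) (hdiag _) (hpos _) ((hpos _).trans (hdiag _))).trans_eq (by ring)
  · rw [← sq_abs]
    refine (pow_le_pow_left₀ (abs_nonneg _) (abs_dotProduct_mulVec_le A u (v - u)) 2).trans_eq ?_
    rw [mul_pow, mul_pow, Real.sq_sqrt (hself _), Real.sq_sqrt (hself _), mul_assoc]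

end gramDet

open scoped ComplexOrder MatrixOrder in
lemma exists_eq_conjTranspose_mul_self {𝕜 ι : Type*} [RCLike 𝕜] [Fintype ι] {A : Matrix ι ι 𝕜}
    (hA : A.PosSemidef) : ∃ N : Matrix ι ι 𝕜, A = Nᴴ * N := by
  classical exact CStarAlgebra.nonneg_iff_eq_star_mul_self.1 hA.nonneg

section closePairs

variable {α ι : Type*} [MeasurableSpace α] [Fintype ι] [DecidableEq ι] {μ : Measure α}
  [SigmaFinite μ] {Φ : α → ι → ℝ}

lemma sum_setIntegral_det_configMatrix_sq_of_gramMatrix_eq_one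
    (hΦ : ∀ a, MemLp (fun x => Φ x a) 2 μ) (hG : gramMatrix μ Φ = 1) (R : Set (α × α)) :
    ∑ q ∈ univ.offDiag, ∫ X in {X : ι → α | (X q.1, X q.2) ∈ R}, (configMatrix Φ X).det ^ 2
        ∂(Measure.pi fun _ => μ) =
      (Fintype.card ι)! * ∫ z in R, gramDet 1 (Φ z.1) (Φ z.2) ∂(μ.prod μ) := by
  set T : ι × ι → α × α → ℝ := fun q z =>
    (Φ z.1 q.1 * Φ z.2 q.2) ^ 2 - Φ z.1 q.1 * Φ z.2 q.1 * (Φ z.1 q.2 * Φ z.2 q.2) with hT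
  have hTint (q : ι × ι) : IntegrableOn (T q) R (μ.prod μ) := by
    have hdiag := ((hΦ q.1).integrable_mul (hΦ q.1)).mul_prod ((hΦ q.2).integrable_mul (hΦ q.2))
    have hcross := ((hΦ q.1).integrable_mul (hΦ q.2)).mul_prod ((hΦ q.1).integrable_mul (hΦ q.2))
    refine ((hdiag.sub hcross).congr (.of_forall fun z => ?_)).integrableOn
    simp only [hT, Pi.sub_apply, Pi.mul_apply]
    ring
  have hreindex (σ : Perm ι) :
      ∑ q ∈ univ.offDiag, ∫ z in R, T (σ q.1, σ q.2) z ∂(μ.prod μ) =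
        ∑ q ∈ univ.offDiag, ∫ z in R, T q z ∂(μ.prod μ) :=
    sum_equiv (σ.prodCongr σ) (by simp) (by simp)
  calc _ = ∑ σ : Perm ι, ∑ q ∈ univ.offDiag, ∫ z in R, T (σ q.1, σ q.2) z ∂(μ.prod μ) := by
        rw [sum_comm]
        exact sum_congr rfl fun q hq =>
          setIntegral_det_configMatrix_sq_pair hΦ hG (mem_offDiag.1 hq).2.2 R
    _ = (Fintype.card ι)! * ∑ q ∈ univ.offDiag, ∫ z in R, T q z ∂(μ.prod μ) := by
        simp [hreindex, Fintype.card_perm]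
    _ = (Fintype.card ι)! * ∑ q, ∫ z in R, T q z ∂(μ.prod μ) := by
        rw [sum_subset (subset_univ univ.offDiag)]
        rintro ⟨a, b⟩ - hab
        obtain rfl : a = b := by simpa using hab
        simp [hT, sq, mul_mul_mul_comm]
    _ = _ := by
        rw [← integral_finsetSum _ fun q _ => (hTint q).integrable]
        simp only [gramDet_one, Fintype.sum_prod_type, hT]

theorem sum_setIntegral_det_configMatrix_sq (hΦ : ∀ a, MemLp (fun x => Φ x a) 2 μ)
    (hdet : IsUnit (gramMatrix μ Φ).det) (R : Set (α × α)) :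
    ∑ q ∈ univ.offDiag, ∫ X in {X : ι → α | (X q.1, X q.2) ∈ R}, (configMatrix Φ X).det ^ 2
        ∂(Measure.pi fun _ => μ) =
      (∫ X, (configMatrix Φ X).det ^ 2 ∂(Measure.pi fun _ => μ)) *
        ∫ z in R, gramDet (gramMatrix μ Φ)⁻¹ (Φ z.1) (Φ z.2) ∂(μ.prod μ) := by
  set M := gramMatrix μ Φ with hM
  obtain ⟨N, hN⟩ : ∃ N : Matrix ι ι ℝ, M⁻¹ = Nᵀ * N := by
    simpa using exists_eq_conjTranspose_mul_self (gramMatrix_posSemidef hΦ).inv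
  have hNM : N * M * Nᵀ = 1 := by
    rw [mul_assoc, mul_eq_one_comm, mul_assoc, ← hN, mul_nonsing_inv _ hdet]
  have hdetN : N.det ^ 2 * M.det = 1 := by
    simpa [sq, mul_right_comm] using congrArg det hNM
  have hΨ (a : ι) : MemLp (fun x => (N *ᵥ Φ x) a) 2 μ :=
    memLp_finsetSum _ fun c _ => (hΦ c).const_mul (N a c)
  have horth := sum_setIntegral_det_configMatrix_sq_of_gramMatrix_eq_one hΨ
    ((gramMatrix_mulVec hΦ N).trans hNM) R
  simp only [configMatrix_mulVec, det_mul, mul_pow, integral_const_mul, ← mul_sum,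
    gramDet_one_mulVec, ← hN] at horth
  rw [integral_det_configMatrix_sq hΦ, ← hM, mul_right_comm, ← horth, mul_right_comm, hdetN,
    one_mul]

theorem one_sub_mul_integral_det_configMatrix_sq_le (hΦ : ∀ a, MemLp (fun x => Φ x a) 2 μ)
    (hdet : IsUnit (gramMatrix μ Φ).det) {R : Set (α × α)} (hR : MeasurableSet R)
    {G : (ι → α) → ℝ} (hGm : AEStronglyMeasurable G (Measure.pi fun _ => μ))
    (hG1 : ∀ X, |G X| ≤ 1) (hGR : ∀ X, (∀ i j, i ≠ j → (X i, X j) ∉ R) → G X = 1) :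
    (1 - ∫ z in R, gramDet (gramMatrix μ Φ)⁻¹ (Φ z.1) (Φ z.2) ∂(μ.prod μ)) *
        ∫ X, (configMatrix Φ X).det ^ 2 ∂(Measure.pi fun _ => μ) ≤
      ∫ X, (configMatrix Φ X).det ^ 2 * G X ^ 2 ∂(Measure.pi fun _ => μ) := by
  have hint := integrable_det_configMatrix_sq hΦ
  set U : Set (ι → α) := ⋃ q ∈ univ.offDiag, {X | (X q.1, X q.2) ∈ R}
  have hUm : MeasurableSet U := measurableSet_biUnion _ fun q _ =>
    hR.preimage ((measurable_pi_apply q.1).prodMk (measurable_pi_apply q.2))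
  have hGU (X : ι → α) (hX : X ∈ Uᶜ) : G X = 1 :=
    hGR X fun i j hij hXR => hX (Set.mem_biUnion (x := (i, j)) (by simpa) hXR)
  have hGint : Integrable (fun X => (configMatrix Φ X).det ^ 2 * G X ^ 2)
      (Measure.pi fun _ => μ) :=
    hint.mul_bdd (c := 1) (hGm.pow 2) (.of_forall fun X => by
      simpa using hG1 X)
  have hclose : ∫ X in U, (configMatrix Φ X).det ^ 2 ∂(Measure.pi fun _ => μ) ≤ _ :=
    (setIntegral_biUnion_finset_le univ.offDiag _ hint fun _ => sq_nonneg _).trans_eq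
      (sum_setIntegral_det_configMatrix_sq hΦ hdet R)
  have hfar : ∫ X in Uᶜ, (configMatrix Φ X).det ^ 2 ∂(Measure.pi fun _ => μ) ≤
      ∫ X, (configMatrix Φ X).det ^ 2 * G X ^ 2 ∂(Measure.pi fun _ => μ) :=
    calc _ = ∫ X in Uᶜ, (configMatrix Φ X).det ^ 2 * G X ^ 2 ∂(Measure.pi fun _ => μ) :=
          setIntegral_congr_fun hUm.compl fun X hX => by simp [hGU X hX]
      _ ≤ _ := setIntegral_le_integral hGint (.of_forall fun X => by positivity)
  linarith [integral_add_compl hUm hint]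

end closePairs

section quantumNumbers

variable {ι : Type*} [Fintype ι]

lemma exists_box_forall_ne {n k : ℕ} (hnk : n < k ^ Fintype.card ι) (p : Fin n → ι → ℕ) :
    ∃ c : ι → ℕ, (∀ a, 1 ≤ c a ∧ c a ≤ k) ∧ ∀ j, p j ≠ c := by
  classical
  by_contra! h
  have hbox : Fintype.piFinset (fun _ : ι => Icc 1 k) ⊆ univ.image p := fun c hc => by
    obtain ⟨j, hj⟩ := h c fun a => mem_Icc.1 (Fintype.mem_piFinset.1 hc a)
    exact mem_image.2 ⟨j, mem_univ j, hj⟩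
  have hcard := (card_le_card hbox).trans card_image_le
  simp only [Fintype.card_piFinset, Nat.card_Icc, add_tsub_cancel_right, prod_const, card_univ,
    Fintype.card_fin] at hcard
  exact hnk.not_ge hcard

-- Some point of the box `{1, …, k}^ι` with `k = ⌊n ^ (1 / d)⌋ + 1 ≤ 2 n ^ (1 / d)` is not a `p j`.
lemma sum_sq_le_of_forall_ne_le [Nonempty ι] {n : ℕ} {p : Fin n → ι → ℕ}
    (hp : ∀ i, ∀ m : ι → ℕ, (∀ a, 1 ≤ m a) → (∀ j, p j ≠ m) → ∑ a, p i a ^ 2 ≤ ∑ a, m a ^ 2)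
    (i : Fin n) :
    ∑ a, (p i a : ℝ) ^ 2 ≤ 4 * Fintype.card ι * (n : ℝ) ^ ((2 : ℝ) / Fintype.card ι) := by
  set d := Fintype.card ι
  set r : ℝ := (n : ℝ) ^ ((1 : ℝ) / d) with hr
  have hr1 : 1 ≤ r := one_le_rpow (by exact_mod_cast i.pos) (by positivity)
  have hrd : r ^ d = n := by
    rw [hr, one_div, rpow_inv_natCast_pow n.cast_nonneg Fintype.card_ne_zero]
  have hr2 : (n : ℝ) ^ ((2 : ℝ) / d) = r ^ 2 := by
    rw [hr, ← rpow_mul_natCast n.cast_nonneg]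
    congr 1
    push_cast
    ring
  have hk : ((⌊r⌋₊ + 1 : ℕ) : ℝ) ≤ 2 * r := by
    push_cast
    linarith [Nat.floor_le (zero_le_one.trans hr1)]
  have hnk : n < (⌊r⌋₊ + 1) ^ d := by
    have : (n : ℝ) < ((⌊r⌋₊ + 1 : ℕ) : ℝ) ^ d := by
      rw [← hrd]
      exact pow_lt_pow_left₀ (by exact_mod_cast Nat.lt_floor_add_one r) (by positivity)
        Fintype.card_ne_zero
    exact_mod_cast this
  obtain ⟨c, hc, hpc⟩ := exists_box_forall_ne hnk p
  calc ∑ a, (p i a : ℝ) ^ 2 ≤ ∑ a, (c a : ℝ) ^ 2 := by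
        exact_mod_cast hp i c (fun a => (hc a).1) hpc
    _ ≤ ∑ _a : ι, (2 * r) ^ 2 := by
        gcongr with a
        exact (Nat.cast_le.2 (hc a).2).trans hk
    _ = 4 * d * (n : ℝ) ^ ((2 : ℝ) / d) := by
        rw [hr2, sum_const, card_univ, nsmul_eq_mul]
        ring

end quantumNumbers

section cube

/-- The closed cube `[0, ℓ]^ι` in Euclidean space, in the form in which it appears in
`dirichletEig`. -/
def cube (ι : Type*) (ℓ : ℝ) : Set (EuclideanSpace ℝ ι) :=
  {x | ∀ a, 0 ≤ x a ∧ x a ≤ ℓ}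

variable {ι : Type*}

lemma cube_eq_preimage (ℓ : ℝ) :
    cube ι ℓ = (MeasurableEquiv.toLp 2 (ι → ℝ)).symm ⁻¹' Set.univ.pi fun _ => Set.Icc 0 ℓ := by
  ext x
  simp [cube, -Set.pi_univ_Icc]

lemma measurableSet_cube [Finite ι] (ℓ : ℝ) : MeasurableSet (cube ι ℓ) := by
  rw [cube_eq_preimage]
  exact (MeasurableEquiv.measurable _) (.univ_pi fun _ => measurableSet_Icc)

lemma volume_cube [Fintype ι] (ℓ : ℝ) : volume (cube ι ℓ) = ENNReal.ofReal ℓ ^ Fintype.card ι := by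
  rw [cube_eq_preimage,
    (EuclideanSpace.volume_preserving_symm_measurableEquiv_toLp ι).measure_preimage_equiv,
    volume_pi_pi]
  simp

end cube

lemma measurableSet_mem_and_dist_lt {E : Type*} [PseudoMetricSpace E]
    [SecondCountableTopology E] [MeasurableSpace E] [OpensMeasurableSpace E] {A : Set E}
    (hA : MeasurableSet A) (r : ℝ) : MeasurableSet {z : E × E | z.1 ∈ A ∧ dist z.1 z.2 < r} :=
  (measurable_fst hA).inter (measurableSet_lt measurable_dist measurable_const)

lemma measure_prod_mem_and_dist_lt {E : Type*} [SeminormedAddCommGroup E]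
    [SecondCountableTopology E] [MeasurableSpace E] [BorelSpace E] (μ : Measure E)
    [SFinite μ] [μ.IsAddLeftInvariant] {A : Set E} (hA : MeasurableSet A) (r : ℝ) :
    (μ.prod μ) {z | z.1 ∈ A ∧ dist z.1 z.2 < r} = μ A * μ (Metric.ball 0 r) := by
  have hslice (x : E) : μ (Prod.mk x ⁻¹' {z | z.1 ∈ A ∧ dist z.1 z.2 < r}) =
      A.indicator (fun _ => μ (Metric.ball 0 r)) x := by
    by_cases hx : x ∈ A
    · have hball : Prod.mk x ⁻¹' {z | z.1 ∈ A ∧ dist z.1 z.2 < r} = Metric.ball x r := by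
        ext y
        simp [hx, dist_comm]
      rw [hball, Set.indicator_of_mem hx, ← measure_preimage_add μ x, preimage_add_ball, sub_self]
    · simp [hx]
  rw [Measure.prod_apply (measurableSet_mem_and_dist_lt hA r)]
  simp_rw [hslice]
  rw [lintegral_indicator_const hA, mul_comm]

lemma abs_prod_le_one {ι : Type*} {t : Finset ι} {u : ι → ℝ} (hu : ∀ a ∈ t, |u a| ≤ 1) :
    |∏ a ∈ t, u a| ≤ 1 := by
  rw [abs_prod]
  exact prod_le_one (fun _ _ => abs_nonneg _) hu

lemma abs_prod_sub_prod_le {ι : Type*} (t : Finset ι) {u v : ι → ℝ} (hu : ∀ a ∈ t, |u a| ≤ 1)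
    (hv : ∀ a ∈ t, |v a| ≤ 1) : |∏ a ∈ t, u a - ∏ a ∈ t, v a| ≤ ∑ a ∈ t, |u a - v a| := by
  classical
  induction t using Finset.induction_on with
  | empty => simp
  | insert a t ha ih =>
    rw [forall_mem_insert] at hu hv
    rw [prod_insert ha, prod_insert ha, sum_insert ha]
    calc |u a * ∏ b ∈ t, u b - v a * ∏ b ∈ t, v b|
        = |(u a - v a) * ∏ b ∈ t, u b + v a * (∏ b ∈ t, u b - ∏ b ∈ t, v b)| := by ring_nf
      _ ≤ |u a - v a| * |∏ b ∈ t, u b| + |v a| * |∏ b ∈ t, u b - ∏ b ∈ t, v b| := by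
          rw [← abs_mul, ← abs_mul]
          exact abs_add_le _ _
      _ ≤ |u a - v a| * 1 + 1 * ∑ b ∈ t, |u b - v b| := by
          gcongr
          exacts [abs_prod_le_one hu.2, hv.1, ih hu.2 hv.2]
      _ = _ := by ring

lemma sq_prod_sin_sub_prod_sin_le {ι : Type*} [Fintype ι] (k x y : ι → ℝ) :
    (∏ a, sin (k a * x a) - ∏ a, sin (k a * y a)) ^ 2 ≤
      (∑ a, k a ^ 2) * ∑ a, (x a - y a) ^ 2 := by
  have hsin (a : ι) : |sin (k a * x a) - sin (k a * y a)| ≤ |k a| * |x a - y a| := by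
    simpa [Real.dist_eq, ← mul_sub, abs_mul] using
      Real.lipschitzWith_sin.dist_le_mul (k a * x a) (k a * y a)
  calc (∏ a, sin (k a * x a) - ∏ a, sin (k a * y a)) ^ 2
      ≤ (∑ a, |k a| * |x a - y a|) ^ 2 := by
        refine sq_le_sq.2 ((abs_prod_sub_prod_le _ (fun _ _ => abs_sin_le_one _)
          fun _ _ => abs_sin_le_one _).trans ?_)
        exact (sum_le_sum fun a _ => hsin a).trans (le_abs_self _)
    _ ≤ (∑ a, k a ^ 2) * ∑ a, (x a - y a) ^ 2 := by
        simpa using sum_mul_sq_le_sq_mul_sq univ (fun a => |k a|) fun a => |x a - y a|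

section dirichletEig

variable {ℓ : ℝ}

lemma dirichletEig_of_mem {x : E3} (hx : x ∈ cube (Fin 3) ℓ) (m : Fin 3 → ℕ) :
    dirichletEig ℓ m x = (2 / ℓ) ^ ((3 : ℝ) / 2) * ∏ a, sin (π * m a / ℓ * x a) :=
  Set.indicator_of_mem (s := cube (Fin 3) ℓ) hx _

lemma dirichletEig_of_notMem {x : E3} (hx : x ∉ cube (Fin 3) ℓ) (m : Fin 3 → ℕ) :
    dirichletEig ℓ m x = 0 :=
  Set.indicator_of_notMem (s := cube (Fin 3) ℓ) hx _

lemma measurable_dirichletEig (ℓ : ℝ) (m : Fin 3 → ℕ) : Measurable (dirichletEig ℓ m) :=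
  Measurable.indicator (s := cube (Fin 3) ℓ) (by fun_prop) (measurableSet_cube ℓ)

lemma rpow_three_div_two_sq (hℓ : 0 ≤ ℓ) : ((2 / ℓ) ^ ((3 : ℝ) / 2)) ^ 2 = 8 / ℓ ^ 3 := by
  rw [← rpow_mul_natCast (by positivity), Nat.cast_ofNat, div_mul_cancel₀ _ two_ne_zero,
    rpow_ofNat, div_pow]
  norm_num

lemma dirichletEig_sq_le (hℓ : 0 ≤ ℓ) (m : Fin 3 → ℕ) (x : E3) :
    dirichletEig ℓ m x ^ 2 ≤ 8 / ℓ ^ 3 := by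
  by_cases hx : x ∈ cube (Fin 3) ℓ
  · rw [dirichletEig_of_mem hx, mul_pow, rpow_three_div_two_sq hℓ, ← prod_pow]
    exact mul_le_of_le_one_right (by positivity)
      (prod_le_one (fun _ _ => sq_nonneg _) fun _ _ => sin_sq_le_one _)
  · rw [dirichletEig_of_notMem hx, zero_pow two_ne_zero]
    positivity

lemma dirichletEig_sub_sq_le (hℓ : 0 ≤ ℓ) (m : Fin 3 → ℕ) {x y : E3} (hx : x ∈ cube (Fin 3) ℓ)
    (hy : y ∈ cube (Fin 3) ℓ) :
    (dirichletEig ℓ m x - dirichletEig ℓ m y) ^ 2 ≤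
      8 / ℓ ^ 3 * ((π / ℓ) ^ 2 * ∑ a, (m a : ℝ) ^ 2) * dist x y ^ 2 := by
  rw [dirichletEig_of_mem hx, dirichletEig_of_mem hy, ← mul_sub, mul_pow,
    rpow_three_div_two_sq hℓ, mul_assoc]
  refine mul_le_mul_of_nonneg_left ?_ (by positivity)
  refine (sq_prod_sin_sub_prod_sin_le (fun a => π * m a / ℓ) x y).trans_eq ?_
  simp only [EuclideanSpace.dist_sq_eq, Real.dist_eq, sq_abs, mul_sum, mul_div_right_comm, mul_pow]

lemma memLp_mul_dirichletEig (ℓ : ℝ) (m : Fin 3 → ℕ) {w : E3 → ℝ} (hwm : Measurable w)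
    (hw : ∀ x, |w x| ≤ 1) : MemLp (fun x => w x * dirichletEig ℓ m x) 2 := by
  have hcube : volume (cube (Fin 3) ℓ) ≠ ⊤ := by simp [volume_cube]
  refine (memLp_indicator_const 2 (measurableSet_cube ℓ) ((2 / ℓ) ^ ((3 : ℝ) / 2))
    (.inr hcube)).mono (hwm.mul (measurable_dirichletEig ℓ m)).aestronglyMeasurable
    (.of_forall fun x => ?_)
  rw [norm_mul]
  refine (mul_le_of_le_one_left (norm_nonneg _) (hw x)).trans ?_
  by_cases hx : x ∈ cube (Fin 3) ℓ
  · rw [dirichletEig_of_mem hx, Set.indicator_of_mem hx, norm_mul]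
    exact mul_le_of_le_one_right (norm_nonneg _)
      (abs_prod_le_one fun _ _ => abs_sin_le_one _)
  · simp [dirichletEig_of_notMem hx]

end dirichletEig

section orbitals

variable {ι : Type*} {ℓ r : ℝ} {p : ι → Fin 3 → ℕ} {w : E3 → ℝ}

/-- The vector of the values at `x` of the Dirichlet eigenfunctions with quantum numbers `p i`. -/
def dirichletOrbitals (ℓ : ℝ) (p : ι → Fin 3 → ℕ) (x : E3) : ι → ℝ :=
  fun i => dirichletEig ℓ (p i) x

lemma dirichletOrbitals_of_notMem {x : E3} (hx : x ∉ cube (Fin 3) ℓ) :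
    dirichletOrbitals ℓ p x = 0 :=
  funext fun i => dirichletEig_of_notMem hx (p i)

variable [Fintype ι]

lemma dirichletOrbitals_dotProduct_self_le (hℓ : 0 ≤ ℓ) (x : E3) :
    dirichletOrbitals ℓ p x ⬝ᵥ dirichletOrbitals ℓ p x ≤ Fintype.card ι * (8 / ℓ ^ 3) :=
  calc ∑ i, dirichletEig ℓ (p i) x * dirichletEig ℓ (p i) x ≤ ∑ _i : ι, 8 / ℓ ^ 3 :=
        sum_le_sum fun i _ => (sq _).symm.trans_le (dirichletEig_sq_le hℓ (p i) x)
    _ = Fintype.card ι * (8 / ℓ ^ 3) := by simp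

lemma dirichletOrbitals_sub_dotProduct_self_le (hℓ : 0 ≤ ℓ) {x y : E3}
    (hx : x ∈ cube (Fin 3) ℓ) (hy : y ∈ cube (Fin 3) ℓ) :
    (dirichletOrbitals ℓ p y - dirichletOrbitals ℓ p x) ⬝ᵥ
        (dirichletOrbitals ℓ p y - dirichletOrbitals ℓ p x) ≤
      8 / ℓ ^ 3 * ((π / ℓ) ^ 2 * ∑ i, ∑ a, (p i a : ℝ) ^ 2) * dist x y ^ 2 := by
  rw [mul_sum, mul_sum, sum_mul, dist_comm]
  exact sum_le_sum fun i _ => (sq _).symm.trans_le (dirichletEig_sub_sq_le hℓ (p i) hy hx)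

lemma abs_gramDet_smul_dirichletOrbitals_le [DecidableEq ι] (hℓ : 0 ≤ ℓ)
    (hw : ∀ x, |w x| ≤ 1) {A : Matrix ι ι ℝ} (hA : A.PosSemidef) (x y : E3) :
    |gramDet A (w x • dirichletOrbitals ℓ p x) (w y • dirichletOrbitals ℓ p y)| ≤
      ‖toEuclideanCLM (𝕜 := ℝ) A‖ ^ 2 * (Fintype.card ι * (8 / ℓ ^ 3)) *
        (8 / ℓ ^ 3 * ((π / ℓ) ^ 2 * ∑ i, ∑ a, (p i a : ℝ) ^ 2) * dist x y ^ 2) := by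
  by_cases hx : x ∈ cube (Fin 3) ℓ
  swap
  · rw [dirichletOrbitals_of_notMem hx, smul_zero, gramDet_zero_left, abs_zero]
    positivity
  by_cases hy : y ∈ cube (Fin 3) ℓ
  swap
  · rw [dirichletOrbitals_of_notMem hy, smul_zero, gramDet_zero_right, abs_zero]
    positivity
  have hweight : |w x ^ 2 * w y ^ 2| ≤ 1 := by
    rw [← mul_pow, abs_pow, abs_mul]
    exact pow_le_one₀ (by positivity) (mul_le_one₀ (hw x) (abs_nonneg _) (hw y))
  rw [gramDet_smul, abs_mul]
  refine (mul_le_of_le_one_left (abs_nonneg _) hweight).trans ((abs_gramDet_le hA _ _).trans ?_)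
  gcongr
  · exact sum_nonneg fun i _ => mul_self_nonneg _
  · exact dirichletOrbitals_dotProduct_self_le hℓ x
  · exact dirichletOrbitals_sub_dotProduct_self_le hℓ hx hy

lemma measureReal_cube_and_dist_lt (hℓ : 0 ≤ ℓ) (hr : 0 ≤ r) :
    (volume.prod volume).real {z : E3 × E3 | z.1 ∈ cube (Fin 3) ℓ ∧ dist z.1 z.2 < r} =
      ℓ ^ 3 * (r ^ 3 * (π * 4 / 3)) := by
  rw [measureReal_def, measure_prod_mem_and_dist_lt volume (measurableSet_cube ℓ), volume_cube,
    EuclideanSpace.volume_ball_fin_three]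
  have hball : 0 ≤ π * 4 / 3 := by positivity
  simp [hℓ, hr, hball]

lemma setIntegral_gramDet_smul_dirichletOrbitals_le [DecidableEq ι] (hℓ : 0 < ℓ) (hr : 0 ≤ r)
    (hw : ∀ x, |w x| ≤ 1) {A : Matrix ι ι ℝ} (hA : A.PosSemidef) :
    ∫ z in {z : E3 × E3 | dist z.1 z.2 < r}, gramDet A (w z.1 • dirichletOrbitals ℓ p z.1)
        (w z.2 • dirichletOrbitals ℓ p z.2) ∂(volume.prod volume) ≤
      256 / 3 * π ^ 3 * Fintype.card ι * (∑ i, ∑ a, (p i a : ℝ) ^ 2) *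
        ‖toEuclideanCLM (𝕜 := ℝ) A‖ ^ 2 * (r / ℓ) ^ 5 := by
  set S : Set (E3 × E3) := {z | z.1 ∈ cube (Fin 3) ℓ ∧ dist z.1 z.2 < r}
  have hSvol := measureReal_cube_and_dist_lt hℓ.le hr
  have hSfin : (volume.prod volume) S < ⊤ := by
    rw [measure_prod_mem_and_dist_lt volume (measurableSet_cube ℓ), volume_cube]
    exact ENNReal.mul_lt_top (by simp) measure_ball_lt_top
  have hsupp (z : E3 × E3) (hz : z ∈ {z : E3 × E3 | dist z.1 z.2 < r} \ S) :
      gramDet A (w z.1 • dirichletOrbitals ℓ p z.1) (w z.2 • dirichletOrbitals ℓ p z.2) = 0 := by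
    rw [dirichletOrbitals_of_notMem fun h => hz.2 ⟨h, hz.1⟩, smul_zero, gramDet_zero_left]
  rw [setIntegral_eq_of_subset_of_forall_sdiff_eq_zero
    (measurableSet_lt measurable_dist measurable_const) (fun z hz => hz.2) hsupp]
  refine (Real.le_norm_self _).trans ((norm_setIntegral_le_of_norm_le_const hSfin (C :=
    ‖toEuclideanCLM (𝕜 := ℝ) A‖ ^ 2 * (Fintype.card ι * (8 / ℓ ^ 3)) *
      (8 / ℓ ^ 3 * ((π / ℓ) ^ 2 * ∑ i, ∑ a, (p i a : ℝ) ^ 2) * r ^ 2))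
    fun z hz => (abs_gramDet_smul_dirichletOrbitals_le hℓ.le hw hA z.1 z.2).trans ?_).trans_eq ?_)
  · gcongr
    exact hz.2.le
  · rw [hSvol]
    field_simp
    ring

end orbitals

section slater

variable {n : ℕ} {ℓ r s : ℝ} {p : Fin n → Fin 3 → ℕ} {w : E3 → ℝ} {M : Matrix (Fin n) (Fin n) ℝ}
  {G : (Fin n → E3) → ℝ}

lemma slaterDR_sq_mul_prod_sq (u : Fin n → E3 → ℝ) (w : E3 → ℝ) (X : Fin n → E3) :
    slaterDR u X ^ 2 * (∏ i, w (X i)) ^ 2 = ((n ! : ℝ) ^ (-(1 : ℝ) / 2)) ^ 2 *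
      (configMatrix (fun x => w x • fun i => u i x) X).det ^ 2 := by
  have hdet : (configMatrix (fun x => w x • fun i => u i x) X).det =
      (∏ i, w (X i)) * (of fun α i => u α (X i)).det :=
    det_mul_row (fun i => w (X i)) (of fun α i => u α (X i))
  rw [hdet, slaterDR]
  ring

theorem one_sub_mul_integral_slaterDR_sq_le (hℓ : 0 < ℓ) (hr : 0 ≤ r) (hwm : Measurable w)
    (hw : ∀ x, |w x| ≤ 1)
    (hM : ∀ i j, M i j = ∫ x, dirichletEig ℓ (p i) x * dirichletEig ℓ (p j) x * w x ^ 2)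
    (hdet : IsUnit M.det) (hGm : AEStronglyMeasurable G) (hG : ∀ X, |G X| ≤ 1)
    (hGr : ∀ X, (∀ i j, i ≠ j → r ≤ dist (X i) (X j)) → G X = 1) :
    (1 - 256 / 3 * π ^ 3 * n * (∑ i, ∑ a, (p i a : ℝ) ^ 2) * matOpNormR M⁻¹ ^ 2 *
        (r / ℓ) ^ 5) *
        ∫ X, slaterDR (fun i => dirichletEig ℓ (p i)) X ^ 2 * (∏ i, w (X i)) ^ 2 ≤
      ∫ X, slaterDR (fun i => dirichletEig ℓ (p i)) X ^ 2 * (∏ i, w (X i)) ^ 2 * G X ^ 2 := by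
  set Φ : E3 → Fin n → ℝ := fun x => w x • dirichletOrbitals ℓ p x with hΦ
  have hΦ2 (i : Fin n) : MemLp (fun x => Φ x i) 2 volume := memLp_mul_dirichletEig ℓ (p i) hwm hw
  obtain rfl : M = gramMatrix volume Φ := by
    ext i j
    rw [hM]
    exact integral_congr_ae (.of_forall fun x => by
      simp only [hΦ, Pi.smul_apply, smul_eq_mul, dirichletOrbitals]
      ring)
  have herror := setIntegral_gramDet_smul_dirichletOrbitals_le (p := p) hℓ hr hw
    (gramMatrix_posSemidef hΦ2).inv
  have hmain := one_sub_mul_integral_det_configMatrix_sq_le hΦ2 hdet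
    (measurableSet_lt measurable_dist measurable_const) hGm hG
    fun X hX => hGr X fun i j hij => not_lt.1 (hX i j hij)
  have hslater (X : Fin n → E3) : slaterDR (fun i => dirichletEig ℓ (p i)) X ^ 2 *
      (∏ i, w (X i)) ^ 2 = ((n ! : ℝ) ^ (-(1 : ℝ) / 2)) ^ 2 * (configMatrix Φ X).det ^ 2 :=
    slaterDR_sq_mul_prod_sq _ w X
  simp_rw [hslater, mul_assoc (((n ! : ℝ) ^ (-(1 : ℝ) / 2)) ^ 2)]
  rw [integral_const_mul, integral_const_mul, mul_left_comm]
  refine mul_le_mul_of_nonneg_left (le_trans ?_ hmain) (sq_nonneg _)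
  rw [Fintype.card_fin] at herror
  exact mul_le_mul_of_nonneg_right (sub_le_sub_left herror 1)
    (integral_nonneg fun X => sq_nonneg _)

theorem jastrow_norm_comparison_general (hℓ : 0 < ℓ) (hs : 0 ≤ s)
    (hp : ∀ i, ∀ m : Fin 3 → ℕ, (∀ a, 1 ≤ m a) → (∀ j, p j ≠ m) →
      ∑ a, p i a ^ 2 ≤ ∑ a, m a ^ 2)
    (hwm : Measurable w) (hw : ∀ x, |w x| ≤ 1)
    (hM : ∀ i j, M i j = ∫ x, dirichletEig ℓ (p i) x * dirichletEig ℓ (p j) x * w x ^ 2)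
    (hdet : IsUnit M.det) (hGm : AEStronglyMeasurable G) (hG : ∀ X, |G X| ≤ 1)
    (hGs : ∀ X, (∀ i j, i ≠ j → 2 * s ≤ dist (X i) (X j)) → G X = 1) :
    (1 - 32768 * π ^ 3 * (n : ℝ) ^ ((8 : ℝ) / 3) * matOpNormR M⁻¹ ^ 2 * (s / ℓ) ^ 5) *
        ∫ X, slaterDR (fun i => dirichletEig ℓ (p i)) X ^ 2 * (∏ i, w (X i)) ^ 2 ≤
      ∫ X, slaterDR (fun i => dirichletEig ℓ (p i)) X ^ 2 * (∏ i, w (X i)) ^ 2 * G X ^ 2 := by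
  have henergy : ∑ i, ∑ a, (p i a : ℝ) ^ 2 ≤ n * (12 * (n : ℝ) ^ ((2 : ℝ) / 3)) := by
    refine (sum_le_sum fun i _ => sum_sq_le_of_forall_ne_le hp i).trans_eq ?_
    norm_num
  have hpow : (n : ℝ) ^ ((8 : ℝ) / 3) = n * (n * (n : ℝ) ^ ((2 : ℝ) / 3)) := by
    rw [← mul_assoc, ← sq, ← rpow_natCast, ← rpow_add_of_nonneg n.cast_nonneg (by norm_num)
      (by norm_num)]
    norm_num
  refine le_trans ?_
    (one_sub_mul_integral_slaterDR_sq_le hℓ (by positivity : 0 ≤ 2 * s) hwm hw hM hdet hGm hG hGs)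
  gcongr ?_ * _
  refine sub_le_sub_left ?_ 1
  -- `32768 = 256 / 3 * 12 * 2 ^ 5`
  calc 256 / 3 * π ^ 3 * n * (∑ i, ∑ a, (p i a : ℝ) ^ 2) * matOpNormR M⁻¹ ^ 2 * (2 * s / ℓ) ^ 5
      ≤ 256 / 3 * π ^ 3 * n * (n * (12 * (n : ℝ) ^ ((2 : ℝ) / 3))) * matOpNormR M⁻¹ ^ 2 *
          (2 * s / ℓ) ^ 5 := by gcongr
    _ = _ := by
        rw [hpow]
        ring

end slater

section jastrow

variable {n : ℕ} {g : E3 → ℝ}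

/-- The Jastrow factor `∏_{i<j} g(x_i - x_j)` with pair function `g`. -/
def jastrowFactor (g : E3 → ℝ) (X : Fin n → E3) : ℝ :=
  ∏ i, ∏ j, if i < j then g (X i - X j) else 1

lemma measurable_jastrowFactor (hg : Measurable g) :
    Measurable (jastrowFactor g : (Fin n → E3) → ℝ) := by
  refine measurable_fun_prod _ fun i _ => measurable_fun_prod _ fun j _ => ?_
  split_ifs <;> fun_prop

lemma abs_jastrowFactor_le_one (hg : ∀ x, |g x| ≤ 1) (X : Fin n → E3) :
    |jastrowFactor g X| ≤ 1 := by
  refine abs_prod_le_one fun i _ => abs_prod_le_one fun j _ => ?_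
  split_ifs
  exacts [hg _, abs_one.le]

lemma jastrowFactor_eq_one {r : ℝ} (hg : ∀ x, r ≤ ‖x‖ → g x = 1) {X : Fin n → E3}
    (hX : ∀ i j, i ≠ j → r ≤ dist (X i) (X j)) : jastrowFactor g X = 1 := by
  refine prod_eq_one fun i _ => prod_eq_one fun j _ => ?_
  split_ifs with hij
  exacts [hg _ ((hX i j hij.ne).trans_eq (dist_eq_norm _ _)), rfl]

end jastrow

end SlaterJastrow

theorem jastrow_norm_comparison :
    ∃ C : ℝ, 0 < C ∧
      ∀ (ℓ : ℝ) (n m : ℕ) (s : ℝ),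
        0 < ℓ → 1 ≤ n → 1 ≤ m → 0 < s →
        ∀ p : Fin n → (Fin 3 → ℕ),
          Function.Injective p →
          (∀ i a, 1 ≤ p i a) →
          (∀ i, ∀ m' : Fin 3 → ℕ, (∀ a, 1 ≤ m' a) → (∀ j, p j ≠ m') →
            (∑ a, (p i a) ^ 2) ≤ ∑ a, (m' a) ^ 2) →
        ∀ y : Fin m → E3,
        ∀ f : E3 → ℝ, Measurable f → (∀ x, 0 ≤ f x ∧ f x ≤ 1) →
        ∀ M : Matrix (Fin n) (Fin n) ℝ,
          (∀ i j, M i j = ∫ x : E3, dirichletEig ℓ (p i) x * dirichletEig ℓ (p j) x *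
              ∏ k : Fin m, f (x - y k) ^ 2) →
          IsUnit M.det →
        ∀ g : E3 → ℝ, Measurable g → (∀ x, 0 ≤ g x ∧ g x ≤ 1) →
          (∀ x : E3, 2 * s ≤ ‖x‖ → g x = 1) →
          (1 - C * (n : ℝ) ^ ((8:ℝ)/3) * (matOpNormR M⁻¹) ^ 2 * (s / ℓ) ^ 5) *
              (∫ X : Fin n → E3, (slaterDR (fun i => dirichletEig ℓ (p i)) X) ^ 2 *
                (∏ i, ∏ j, f (X i - y j)) ^ 2)
            ≤ ∫ X : Fin n → E3, (slaterDR (fun i => dirichletEig ℓ (p i)) X) ^ 2 *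
                (∏ i, ∏ j, f (X i - y j)) ^ 2 *
                (∏ i : Fin n, ∏ j : Fin n, if i < j then g (X i - X j) else 1) ^ 2 := by
  refine ⟨32768 * π ^ 3, by positivity, fun ℓ n m s hℓ _ _ hs p _ _ hp y f hf hf1 M hM hdet g hg
    hg1 hgs => ?_⟩
  have habs {t : ℝ} (ht : 0 ≤ t ∧ t ≤ 1) : |t| ≤ 1 := (abs_of_nonneg ht.1).trans_le ht.2
  exact jastrow_norm_comparison_general (w := fun x => ∏ k, f (x - y k)) (G := jastrowFactor g)
    hℓ hs.le hp (by fun_prop) (fun x => abs_prod_le_one fun k _ => habs (hf1 _))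
    (by simpa only [Finset.prod_pow] using hM) hdet
    (measurable_jastrowFactor hg).aestronglyMeasurable
    (abs_jastrowFactor_le_one fun x => habs (hg1 x)) fun X => jastrowFactor_eq_one hgs
end
end

section
/- There exists a constant C such that for every ℓ > 0, every n ≥ 1, and every set S ⊂ {1,2,3,…}³ with |S| = n satisfying |m| ≤ |m'| for all m ∈ S and m' ∈ {1,2,3,…}³ ∖ S, one has Σ_{m∈S} π² |m|² / ℓ² ≤ (3/5) (6π²)^{2/3} (n^{5/3}/ℓ²) ( 1 + C n^{−1/3} ). -/
noncomputable section

open Real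
open scoped BigOperators

/-!
Let `S` consist of the `n` shortest points of `{1, 2, 3, …}ᵈ` and let `R` be the largest length in
`S`. Every lattice point shorter than `R` lies in `S`, so `n R² - ∑_{m ∈ S} |m|²` equals the Riesz
mean `∑_m (R² - |m|²)₊` over all lattice points. Slicing one coordinate at a time and comparing each
one-dimensional sum with an integral bounds this mean below by `c R^(d+2) - d R^(d+1)`, where `c` is
the integral of `1 - |x|²` over the part of the unit ball in the positive orthant. Hence
`∑_{m ∈ S} |m|² ≤ (n R² - c R^(d+2)) + d R^(d+1)`. By weighted AM-GM the bracket is at most the Weyl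
term for every value of `R`, and positivity of the left side forces `R = O(n^(1/d))`, which makes
the last term an error of relative order `n^(-1/d)`.
-/

open Finset

lemma integral_sub_le_sum_Icc {f : ℝ → ℝ} (hf : AntitoneOn f (Set.Ici 0)) (hf₀ : 0 ≤ f)
    {r : ℝ} (hr : 0 ≤ r) {M : ℕ} (hM : r ≤ M + 1) :
    (∫ x in (0)..r, f x) - f 0 ≤ ∑ i ∈ Icc 1 M, f i := by
  rw [← Nat.cast_add_one] at hM
  have hanti : AntitoneOn f (Set.Icc (0 : ℕ) (M + 1 : ℕ)) :=
    hf.mono fun x hx => by simpa using hx.1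
  have hextend : ∫ x in (0)..r, f x ≤ ∫ x in (0)..(M + 1 : ℕ), f x :=
    intervalIntegral.integral_mono_interval le_rfl hr hM (.of_forall hf₀) <|
      AntitoneOn.intervalIntegrable <| hf.mono fun x hx => by
        rw [Set.uIcc_of_le (Nat.cast_nonneg _)] at hx
        exact hx.1
  have hcompare := hanti.integral_le_sum_Ico (Nat.zero_le _)
  rw [sum_eq_sum_Ico_succ_bot M.succ_pos, zero_add, Nat.succ_eq_add_one,
    Ico_add_one_right_eq_Icc, Nat.cast_zero] at hcompare
  linarith

/-- The `k`-th moment `∫₀¹ (1 - x²)^(k/2) dx` of the quarter circle; the half-integer powers are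
natural powers of the square root. -/
def semicircleMoment (k : ℕ) : ℝ := ∫ x in (0)..1, √(1 - x ^ 2) ^ k

lemma semicircleMoment_nonneg (k : ℕ) : 0 ≤ semicircleMoment k :=
  intervalIntegral.integral_nonneg zero_le_one fun _ _ => by positivity

lemma semicircleMoment_le_one (k : ℕ) : semicircleMoment k ≤ 1 := by
  have hle : semicircleMoment k ≤ ∫ _ in (0 : ℝ)..1, (1 : ℝ) :=
    intervalIntegral.integral_mono_on zero_le_one
      ((by fun_prop : Continuous fun x : ℝ => √(1 - x ^ 2) ^ k).intervalIntegrable _ _)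
      (by simp) fun x _ =>
        pow_le_one₀ (sqrt_nonneg _) (sqrt_le_one.2 (by linarith [sq_nonneg x]))
  simpa using hle

lemma semicircleMoment_eq_integral_cos_pow (k : ℕ) :
    semicircleMoment k = ∫ θ in (0)..(π / 2), cos θ ^ (k + 1) := by
  have hsubst : ∫ θ in (0)..(π / 2), √(1 - sin θ ^ 2) ^ k * cos θ = semicircleMoment k := by
    simpa using! intervalIntegral.integral_comp_mul_deriv (a := 0) (b := π / 2)
      (g := fun x => √(1 - x ^ 2) ^ k) (fun θ _ => hasDerivAt_sin θ)
      continuous_cos.continuousOn (by fun_prop)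
  rw [← hsubst]
  refine intervalIntegral.integral_congr fun θ hθ => ?_
  rw [Set.uIcc_of_le (by positivity)] at hθ
  have hcos : √(1 - sin θ ^ 2) = cos θ :=
    (cos_eq_sqrt_one_sub_sin_sq (by linarith [hθ.1, pi_pos]) hθ.2).symm
  rw [hcos, pow_succ]

lemma semicircleMoment_add_two (k : ℕ) :
    semicircleMoment (k + 2) = (k + 2) / (k + 3) * semicircleMoment k := by
  simp only [semicircleMoment_eq_integral_cos_pow]
  rw [integral_cos_pow, cos_pi_div_two, sin_zero, zero_pow (Nat.succ_ne_zero _)]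
  push_cast
  ring

lemma Gamma_three_half_eq : Gamma (3 / 2) = √π / 2 := by
  rw [show (3 / 2 : ℝ) = 1 / 2 + 1 by norm_num, Gamma_add_one (by norm_num), Gamma_one_half_eq]
  ring

lemma semicircleMoment_eq_Gamma (k : ℕ) :
    semicircleMoment k = √π / 2 * (Gamma (k / 2 + 1) / Gamma ((k + 1) / 2 + 1)) := by
  induction k using Nat.twoStepInduction with
  | zero =>
    have hπ : √π ≠ 0 := by positivity
    norm_num [semicircleMoment, Gamma_three_half_eq, div_mul_div_cancel₀', hπ]
  | one =>
    rw [semicircleMoment_eq_integral_cos_pow, integral_cos_sq]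
    norm_num [Gamma_three_half_eq]
    linarith [mul_self_sqrt pi_pos.le]
  | more k ih _ =>
    have h₁ : Gamma ((k + 2 : ℕ) / 2 + 1) = (k / 2 + 1) * Gamma (k / 2 + 1) := by
      rw [← Gamma_add_one (by positivity)]; push_cast; ring_nf
    have h₂ : Gamma (((k + 2 : ℕ) + 1) / 2 + 1) = ((k + 1) / 2 + 1) * Gamma ((k + 1) / 2 + 1) := by
      rw [← Gamma_add_one (by positivity)]; push_cast; ring_nf
    rw [semicircleMoment_add_two, ih, h₁, h₂]
    field_simp
    ring

lemma integral_sqrt_sub_sq_pow (t : ℝ) (k : ℕ) :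
    ∫ x in (0)..√t, √(t - x ^ 2) ^ k = semicircleMoment k * √t ^ (k + 1) := by
  obtain ht | ht := le_total t 0
  · simp [sqrt_eq_zero_of_nonpos ht]
  have hscale (x : ℝ) : √(t - (√t * x) ^ 2) ^ k = √t ^ k * √(1 - x ^ 2) ^ k := by
    rw [mul_pow √t, sq_sqrt ht, ← mul_one_sub, sqrt_mul ht, mul_pow]
  have hsubst := intervalIntegral.smul_integral_comp_mul_left (a := 0) (b := 1)
    (fun x => √(t - x ^ 2) ^ k) √t
  simp only [hscale, intervalIntegral.integral_const_mul, mul_zero, mul_one, smul_eq_mul]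
    at hsubst
  rw [← hsubst, semicircleMoment]
  ring

lemma le_sum_Icc_sqrt_sub_sq_pow {t : ℝ} {M : ℕ} (hM : √t ≤ M + 1) (k : ℕ) :
    semicircleMoment k * √t ^ (k + 1) - √t ^ k ≤ ∑ i ∈ Icc 1 M, √(t - (i : ℝ) ^ 2) ^ k := by
  have hanti : AntitoneOn (fun x : ℝ => √(t - x ^ 2) ^ k) (Set.Ici 0) := by
    intro x (hx : 0 ≤ x) y _ hxy
    dsimp only
    gcongr
  have h := integral_sub_le_sum_Icc hanti (fun x => by positivity) (sqrt_nonneg t) hM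
  simpa [integral_sqrt_sub_sq_pow] using h

lemma sum_piFinset_succ {M : Type*} [AddCommMonoid M] {d : ℕ} {α : Fin (d + 1) → Type*}
    (s : ∀ i, Finset (α i)) (f : (∀ i, α i) → M) :
    ∑ m ∈ Fintype.piFinset s, f m =
      ∑ a ∈ s 0, ∑ m ∈ Fintype.piFinset fun i => s (Fin.succ i), f (Fin.cons a m) := by
  rw [← sum_product']
  refine sum_equiv (Fin.consEquiv α).symm (fun m => ?_) fun m _ => ?_
  · simp [Fin.forall_fin_succ, Fin.consEquiv, Fin.tail]
  · simp [Fin.consEquiv]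

/-- The integral of `(1 - |x|²)^(k/2)` over the part of the unit ball of `ℝᵈ` with nonnegative
coordinates, encoded as the product obtained by slicing off one coordinate at a time. -/
def ballMoment (d k : ℕ) : ℝ := ∏ j ∈ range d, semicircleMoment (k + j)

lemma ballMoment_nonneg (d k : ℕ) : 0 ≤ ballMoment d k :=
  prod_nonneg fun _ _ => semicircleMoment_nonneg _

lemma ballMoment_le_one (d k : ℕ) : ballMoment d k ≤ 1 :=
  prod_le_one (fun _ _ => semicircleMoment_nonneg _) fun _ _ => semicircleMoment_le_one _

lemma ballMoment_succ (d k : ℕ) :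
    ballMoment (d + 1) k = ballMoment d k * semicircleMoment (k + d) :=
  prod_range_succ _ _

lemma ballMoment_eq_Gamma (d k : ℕ) :
    ballMoment d k = (√π / 2) ^ d * (Gamma (k / 2 + 1) / Gamma ((k + d) / 2 + 1)) := by
  induction d with
  | zero =>
    have : Gamma (k / 2 + 1) ≠ 0 := (Gamma_pos_of_pos (by positivity)).ne'
    simp [ballMoment, this]
  | succ d ih =>
    have : Gamma ((k + d) / 2 + 1) ≠ 0 := (Gamma_pos_of_pos (by positivity)).ne'
    rw [ballMoment_succ, ih, semicircleMoment_eq_Gamma]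
    push_cast
    rw [← add_assoc, pow_succ]
    field_simp

lemma ballMoment_two (d : ℕ) :
    ballMoment d 2 = 2 / (d + 2) * ((√π / 2) ^ d / Gamma (d / 2 + 1)) := by
  have h : Gamma ((2 + d) / 2 + 1) = (d / 2 + 1) * Gamma (d / 2 + 1) := by
    rw [← Gamma_add_one (by positivity)]; ring_nf
  rw [ballMoment_eq_Gamma, Nat.cast_two, h, div_self two_ne_zero, one_add_one_eq_two, Gamma_two]
  field_simp

lemma ballMoment_two_pos (d : ℕ) : 0 < ballMoment d 2 := by
  have := Gamma_pos_of_pos (show (0 : ℝ) < d / 2 + 1 by positivity)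
  rw [ballMoment_two]
  positivity

lemma le_sum_box_sqrt_sub_sq_pow {r : ℝ} (hr : 0 ≤ r) (k d : ℕ) {t : ℝ} (ht : t ≤ r ^ 2) :
    ballMoment d (k + 1) * √t ^ (k + 1 + d) - d * r ^ (k + d) ≤
      ∑ m ∈ Fintype.piFinset fun _ : Fin d => Icc 1 ⌊r⌋₊, √(t - ∑ a, (m a : ℝ) ^ 2) ^ (k + 1) := by
  induction d generalizing t with
  | zero => simp [ballMoment]
  | succ d ih =>
    set M := ⌊r⌋₊
    set c := ballMoment d (k + 1)
    have hsqrt : √t ≤ r := sqrt_le_iff.2 ⟨hr, ht⟩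
    calc ballMoment (d + 1) (k + 1) * √t ^ (k + 1 + (d + 1)) - (d + 1 : ℕ) * r ^ (k + (d + 1))
      _ = c * (semicircleMoment (k + 1 + d) * √t ^ (k + 1 + d + 1)) - 1 * r ^ (k + 1 + d)
            - r * (d * r ^ (k + d)) := by
        rw [ballMoment_succ]
        push_cast
        ring
      _ ≤ c * (semicircleMoment (k + 1 + d) * √t ^ (k + 1 + d + 1)) - c * √t ^ (k + 1 + d)
            - M * (d * r ^ (k + d)) := by
        gcongr
        · exact ballMoment_le_one _ _
        · exact Nat.floor_le hr
      _ ≤ c * ∑ i ∈ Icc 1 M, √(t - (i : ℝ) ^ 2) ^ (k + 1 + d) - M * (d * r ^ (k + d)) := by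
        rw [← mul_sub]
        gcongr
        · exact ballMoment_nonneg _ _
        · exact le_sum_Icc_sqrt_sub_sq_pow (hsqrt.trans (Nat.lt_floor_add_one r).le) _
      _ = ∑ i ∈ Icc 1 M, (c * √(t - (i : ℝ) ^ 2) ^ (k + 1 + d) - d * r ^ (k + d)) := by
        simp [sum_sub_distrib, mul_sum]
      _ ≤ _ := by
        rw [sum_piFinset_succ]
        refine sum_le_sum fun i _ => ?_
        have hslice := ih (t := t - (i : ℝ) ^ 2) (by linarith [sq_nonneg (i : ℝ)])
        simpa only [Fin.sum_univ_succ, Fin.cons_zero, Fin.cons_succ, ← sub_sub] using hslice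

lemma sum_max_sub_le {α G : Type*} [AddCommGroup G] [LinearOrder G] [IsOrderedAddMonoid G]
    {f : α → G} {S T : Finset α} {E : G}
    (hS : ∀ m ∈ S, f m ≤ E) (hT : ∀ m ∈ T, m ∉ S → E ≤ f m) :
    ∑ m ∈ T, max (E - f m) 0 ≤ #S • E - ∑ m ∈ S, f m := by
  classical
  calc ∑ m ∈ T, max (E - f m) 0
    _ = ∑ m ∈ T ∩ S, max (E - f m) 0 := by
      refine (sum_subset inter_subset_left fun m hm hmS => ?_).symm
      exact max_eq_right (sub_nonpos.2 (hT m hm fun h => hmS (mem_inter.2 ⟨hm, h⟩)))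
    _ ≤ ∑ m ∈ S, max (E - f m) 0 :=
      sum_le_sum_of_subset_of_nonneg inter_subset_right fun _ _ _ => le_max_right _ _
    _ = ∑ m ∈ S, (E - f m) := sum_congr rfl fun m hm => max_eq_left (sub_nonneg.2 (hS m hm))
    _ = #S • E - ∑ m ∈ S, f m := by rw [sum_sub_distrib, sum_const]

/-- The set of momenta of a ground state of `#S` free fermions in the Dirichlet cube: finitely many
points of `{1, 2, 3, …}ᵈ` filled in the order of increasing length. Ties on the outermost sphere may
be resolved arbitrarily. -/
structure IsFermiSea {d : ℕ} (S : Finset (Fin d → ℕ)) : Prop where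
  one_le : ∀ m ∈ S, ∀ a, 1 ≤ m a
  sum_sq_le : ∀ m ∈ S, ∀ m' : Fin d → ℕ, (∀ a, 1 ≤ m' a) → m' ∉ S →
    ∑ a, m a ^ 2 ≤ ∑ a, m' a ^ 2

lemma IsFermiSea.exists_sum_sq_le {d : ℕ} {S : Finset (Fin d → ℕ)} (hS : IsFermiSea S) :
    ∃ R : ℝ, 0 ≤ R ∧ ∑ m ∈ S, ∑ a, (m a : ℝ) ^ 2 ≤
      #S * R ^ 2 - ballMoment d 2 * R ^ (d + 2) + d * R ^ (d + 1) := by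
  obtain rfl | hne := S.eq_empty_or_nonempty
  · exact ⟨0, le_rfl, by simp⟩
  obtain ⟨m₀, hm₀, hmax⟩ := exists_max_image S (fun m => ∑ a, (m a : ℝ) ^ 2) hne
  set E := ∑ a, (m₀ a : ℝ) ^ 2 with hEdef
  have hE : √E ^ 2 = E := sq_sqrt (by positivity)
  have hbox : ∀ m ∈ Fintype.piFinset fun _ : Fin d => Icc 1 ⌊√E⌋₊, m ∉ S →
      E ≤ ∑ a, (m a : ℝ) ^ 2 := fun m hm hmS => by
    have hpos : ∀ a, 1 ≤ m a := fun a => (mem_Icc.1 (Fintype.mem_piFinset.1 hm a)).1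
    rw [hEdef]
    exact_mod_cast hS.sum_sq_le m₀ hm₀ m hpos hmS
  have hlattice := le_sum_box_sqrt_sub_sq_pow (sqrt_nonneg E) 1 d hE.ge
  have hbathtub := sum_max_sub_le hmax hbox
  simp only [Nat.reduceAdd, sq_sqrt'] at hlattice
  rw [nsmul_eq_mul] at hbathtub
  refine ⟨√E, sqrt_nonneg E, ?_⟩
  rw [hE, add_comm d 2, add_comm d 1]
  linarith

lemma add_mul_pow_mul_pow_le (a b : ℕ) {x y : ℝ} (hx : 0 ≤ x) (hy : 0 ≤ y) :
    (a + b) * (x ^ a * y ^ b) ≤ a * x ^ (a + b) + b * y ^ (a + b) := by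
  obtain rfl | hb := eq_or_ne b 0
  · simp
  have hab : (a + b : ℝ) ≠ 0 := by positivity
  have hroot {z : ℝ} (hz : 0 ≤ z) (j : ℕ) : (z ^ (a + b)) ^ (j / (a + b) : ℝ) = z ^ j := by
    rw [← rpow_natCast_mul hz, Nat.cast_add, mul_div_cancel₀ _ hab, rpow_natCast]
  have hmean := geom_mean_le_arith_mean2_weighted (w₁ := a / (a + b)) (w₂ := b / (a + b))
    (by positivity) (by positivity) (pow_nonneg hx (a + b)) (pow_nonneg hy (a + b))
    (by field_simp)
  rw [hroot hx, hroot hy] at hmean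
  calc (a + b) * (x ^ a * y ^ b)
    _ ≤ (a + b) * (a / (a + b) * x ^ (a + b) + b / (a + b) * y ^ (a + b)) := by gcongr
    _ = a * x ^ (a + b) + b * y ^ (a + b) := by field_simp

lemma pow_mul_sq_sub_le {d : ℕ} {c g q R : ℝ} (hc : 0 ≤ c) (hg : 0 ≤ g) (hq : 0 ≤ q) (hR : 0 ≤ R)
    (hcg : c * g ^ d = 2 / (d + 2)) :
    q ^ d * R ^ 2 - c * R ^ (d + 2) ≤ d / (d + 2) * g ^ 2 * q ^ (d + 2) := by
  have hmean := mul_le_mul_of_nonneg_left (add_mul_pow_mul_pow_le d 2 (mul_nonneg hg hq) hR) hc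
  rw [Nat.cast_two] at hmean
  have hleft : c * ((d + 2) * ((g * q) ^ d * R ^ 2)) = 2 * (q ^ d * R ^ 2) := by
    have hcg' : c * g ^ d * (d + 2) = 2 := by rw [hcg]; field_simp
    linear_combination q ^ d * R ^ 2 * hcg'
  have hright : c * (d * (g * q) ^ (d + 2) + 2 * R ^ (d + 2)) =
      2 * (d / (d + 2) * g ^ 2 * q ^ (d + 2)) + 2 * (c * R ^ (d + 2)) := by
    linear_combination d * g ^ 2 * q ^ (d + 2) * hcg
  linarith

lemma le_max_mul_of_pow_le {d : ℕ} (hd : d ≠ 0) {a b q R : ℝ} (ha : 0 < a) (hb : 0 ≤ b)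
    (hq : 1 ≤ q) (h : 0 ≤ q ^ d * R ^ 2 - a * R ^ (d + 2) + b * R ^ (d + 1)) :
    R ≤ max 1 ((b + 1) / a) * q := by
  by_contra! hR
  have hq₀ : 0 ≤ q := by linarith
  have hqR : q < R := (le_mul_of_one_le_left hq₀ (le_max_left _ _)).trans_lt hR
  have hR₀ : 0 < R := by linarith
  have haR : (b + 1) * q < a * R := by
    have := (mul_le_mul_of_nonneg_right (le_max_right 1 ((b + 1) / a)) hq₀).trans_lt hR
    rwa [div_mul_eq_mul_div, div_lt_iff₀' ha] at this
  have hpow : q ^ d * R ^ 2 ≤ q * R ^ (d + 1) := by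
    obtain ⟨e, rfl⟩ := Nat.exists_eq_succ_of_ne_zero hd
    calc q ^ (e + 1) * R ^ 2
      _ = q * (q ^ e * R ^ 2) := by ring
      _ ≤ q * (R ^ e * R ^ 2) := by gcongr
      _ = q * R ^ (e + 1 + 1) := by ring
  have hlt : q ^ d * R ^ 2 + b * R ^ (d + 1) < a * R ^ (d + 2) :=
    calc q ^ d * R ^ 2 + b * R ^ (d + 1)
      _ ≤ q * R ^ (d + 1) + b * q * R ^ (d + 1) := by
        gcongr
        exact le_mul_of_one_le_right hb hq
      _ = (b + 1) * q * R ^ (d + 1) := by ring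
      _ < a * R * R ^ (d + 1) := by gcongr
      _ = a * R ^ (d + 2) := by ring
  linarith

/-- The Weyl (Li–Yau) constant `d / (d + 2) * (2π)² / |B|^(2/d)`, where `|B| = π^(d/2) / Γ(d/2 + 1)`
is the volume of the unit ball of `ℝᵈ`: the leading coefficient in `n ^ (1 + 2/d)` of the sum of the
first `n` Dirichlet eigenvalues on a domain of unit volume. -/
def weylConst (d : ℕ) : ℝ := d / (d + 2) * (4 * π * Gamma (d / 2 + 1) ^ (2 / d : ℝ))

lemma weylConst_pos {d : ℕ} (hd : d ≠ 0) : 0 < weylConst d := by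
  have := Gamma_pos_of_pos (show (0 : ℝ) < d / 2 + 1 by positivity)
  have : 0 < d := hd.bot_lt
  unfold weylConst
  positivity

lemma weylConst_three : weylConst 3 = 3 / 5 * (6 * π ^ 2) ^ (2 / 3 : ℝ) := by
  have hGamma : Gamma (3 / 2 + 1) = 3 / 4 * √π := by
    rw [Gamma_add_one (by norm_num), Gamma_three_half_eq]
    ring
  have hpow : (4 * π) ^ (3 / 2 : ℝ) = 8 * π * √π := by
    have hsqrt : √(4 * π) = 2 * √π := by
      rw [sqrt_mul zero_le_four, show (4 : ℝ) = 2 ^ 2 by norm_num, sqrt_sq zero_le_two]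
    rw [show (3 / 2 : ℝ) = 1 + 1 / 2 by norm_num, rpow_add (by positivity), rpow_one,
      ← sqrt_eq_rpow, hsqrt]
    ring
  have hbase : (4 * π) ^ (3 / 2 : ℝ) * (3 / 4 * √π) = 6 * π ^ 2 := by
    rw [hpow]
    linear_combination 6 * π * mul_self_sqrt pi_pos.le
  have hroot : 4 * π = ((4 * π) ^ (3 / 2 : ℝ)) ^ (2 / 3 : ℝ) := by
    rw [← rpow_mul (by positivity)]
    norm_num
  rw [weylConst, Nat.cast_ofNat, hGamma, hroot, ← mul_rpow (by positivity) (by positivity), hbase]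
  norm_num

lemma mul_pow_mul_sq_sub_le_weylConst {d : ℕ} (hd : d ≠ 0) {q R : ℝ} (hq : 0 ≤ q) (hR : 0 ≤ R) :
    π ^ 2 * (q ^ d * R ^ 2 - ballMoment d 2 * R ^ (d + 2)) ≤ weylConst d * q ^ (d + 2) := by
  have hΓ := Gamma_pos_of_pos (show (0 : ℝ) < d / 2 + 1 by positivity)
  set G := Gamma (d / 2 + 1) ^ (d⁻¹ : ℝ)
  have hGd : G ^ d = Gamma (d / 2 + 1) := rpow_inv_natCast_pow hΓ.le hd
  have hG2 : G ^ 2 = Gamma (d / 2 + 1) ^ (2 / d : ℝ) := by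
    rw [← rpow_mul_natCast hΓ.le, Nat.cast_two, inv_mul_eq_div]
  have hcrit : ballMoment d 2 * (2 / √π * G) ^ d = 2 / (d + 2) := by
    rw [ballMoment_two, mul_pow, hGd, div_pow, div_pow]
    field_simp
  have hlegendre := pow_mul_sq_sub_le (ballMoment_two_pos d).le (by positivity) hq hR hcrit
  calc π ^ 2 * (q ^ d * R ^ 2 - ballMoment d 2 * R ^ (d + 2))
    _ ≤ π ^ 2 * (d / (d + 2) * (2 / √π * G) ^ 2 * q ^ (d + 2)) := by gcongr
    _ = weylConst d * q ^ (d + 2) := by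
      rw [weylConst, mul_pow, div_pow, sq_sqrt pi_pos.le, hG2]
      field_simp
      ring

theorem exists_sum_sq_le_weyl {d : ℕ} (hd : d ≠ 0) :
    ∃ K : ℝ, ∀ (q : ℝ) (S : Finset (Fin d → ℕ)), 1 ≤ q → q ^ d = #S → IsFermiSea S →
      π ^ 2 * ∑ m ∈ S, ∑ a, (m a : ℝ) ^ 2 ≤ weylConst d * q ^ (d + 2) + K * q ^ (d + 1) := by
  set ρ := max 1 ((d + 1) / ballMoment d 2)
  refine ⟨π ^ 2 * d * ρ ^ (d + 1), fun q S hq hcard hS => ?_⟩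
  obtain ⟨R, hR₀, hsum⟩ := hS.exists_sum_sq_le
  rw [← hcard] at hsum
  have hR : R ≤ ρ * q := le_max_mul_of_pow_le hd (ballMoment_two_pos d) d.cast_nonneg hq
    (le_trans (by positivity) hsum)
  calc π ^ 2 * ∑ m ∈ S, ∑ a, (m a : ℝ) ^ 2
    _ ≤ π ^ 2 * (q ^ d * R ^ 2 - ballMoment d 2 * R ^ (d + 2) + d * R ^ (d + 1)) := by gcongr
    _ = π ^ 2 * (q ^ d * R ^ 2 - ballMoment d 2 * R ^ (d + 2)) + π ^ 2 * d * R ^ (d + 1) := by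
      ring
    _ ≤ weylConst d * q ^ (d + 2) + π ^ 2 * d * (ρ * q) ^ (d + 1) := by
      refine add_le_add (mul_pow_mul_sq_sub_le_weylConst hd (zero_le_one.trans hq) hR₀) ?_
      gcongr
    _ = weylConst d * q ^ (d + 2) + π ^ 2 * d * ρ ^ (d + 1) * q ^ (d + 1) := by ring

theorem sum_lowest_dirichlet_eigenvalues_general {d : ℕ} (hd : d ≠ 0) :
    ∃ C : ℝ, ∀ (ℓ : ℝ) (n : ℕ) (S : Finset (Fin d → ℕ)),
      0 < ℓ → 1 ≤ n → #S = n → IsFermiSea S →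
      ∑ m ∈ S, π ^ 2 * (∑ a, (m a : ℝ) ^ 2) / ℓ ^ 2 ≤
        weylConst d * ((n : ℝ) ^ (1 + 2 / d : ℝ) / ℓ ^ 2) * (1 + C * (n : ℝ) ^ (-1 / d : ℝ)) := by
  obtain ⟨K, hK⟩ := exists_sum_sq_le_weyl hd
  refine ⟨K / weylConst d, fun ℓ n S hℓ hn hcard hS => ?_⟩
  have hw := weylConst_pos hd
  set q := (n : ℝ) ^ (d⁻¹ : ℝ)
  have hq : 1 ≤ q := one_le_rpow (by exact_mod_cast hn) (by positivity)
  have hqd : q ^ d = n := rpow_inv_natCast_pow n.cast_nonneg hd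
  have hmain : (n : ℝ) ^ (1 + 2 / d : ℝ) = q ^ (d + 2) := by
    rw [← rpow_mul_natCast n.cast_nonneg]
    push_cast
    congr 1
    field_simp
  have herror : (n : ℝ) ^ (-1 / d : ℝ) = q⁻¹ := by
    rw [← rpow_neg n.cast_nonneg, neg_div, one_div]
  calc ∑ m ∈ S, π ^ 2 * (∑ a, (m a : ℝ) ^ 2) / ℓ ^ 2
    _ = (π ^ 2 * ∑ m ∈ S, ∑ a, (m a : ℝ) ^ 2) / ℓ ^ 2 := by rw [← sum_div, ← mul_sum]
    _ ≤ (weylConst d * q ^ (d + 2) + K * q ^ (d + 1)) / ℓ ^ 2 := by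
      gcongr
      exact hK q S hq (by rw [hqd, hcard]) hS
    _ = _ := by
      rw [hmain, herror]
      field_simp
      ring

theorem sum_lowest_dirichlet_eigenvalues :
    ∃ C : ℝ, ∀ (ℓ : ℝ) (n : ℕ) (S : Finset (Fin 3 → ℕ)),
      0 < ℓ → 1 ≤ n → S.card = n →
      (∀ m ∈ S, ∀ a, 1 ≤ m a) →
      (∀ m ∈ S, ∀ m' : Fin 3 → ℕ, (∀ a, 1 ≤ m' a) → m' ∉ S →
        (∑ a, (m a) ^ 2) ≤ ∑ a, (m' a) ^ 2) →
      (∑ m ∈ S, π ^ 2 * (∑ a, (m a : ℝ) ^ 2) / ℓ ^ 2)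
        ≤ (3 / 5) * (6 * π ^ 2) ^ ((2:ℝ)/3) * ((n : ℝ) ^ ((5:ℝ)/3) / ℓ ^ 2) *
            (1 + C * (n : ℝ) ^ (-(1:ℝ)/3)) := by
  obtain ⟨C, hC⟩ := sum_lowest_dirichlet_eigenvalues_general (d := 3) (by norm_num)
  refine ⟨C, fun ℓ n S hℓ hn hcard hpos hmin => ?_⟩
  have hexponent : (1 + 2 / 3 : ℝ) = 5 / 3 := by norm_num
  simpa only [weylConst_three, Nat.cast_ofNat, hexponent] using hC ℓ n S hℓ hn hcard ⟨hpos, hmin⟩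
end
end
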